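/- arXiv:2409.06810 — 2 statements merged into one kernel-verified Lean document; each statement's English description precedes it below -/
import Mathlib

section
/- (Optimal supersaturation at the Turán threshold) Let k ≥ 4 be an integer, let 0 < γ < 1, and let H be a 2-contractible k-tree with s vertices, t edges, and cross-cut number σ = σ(H). Then there exists β > 0, depending only on H and γ, such that for all sufficiently large n the following holds: if F is a k-graph on [n] with |F| = a·C(n,k−1) where a ≥ σ − 1 + γ, then F contains at least β·a^t·n^{s−t} copies of H (distinct subgraphs of F isomorphic to H). -/
open Finset Filter

attribute [local instance] Classical.propDecidable

/-- The vertex set `[n] = {1,…,n}`. -/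
def vtx (n : ℕ) : Finset ℕ := Finset.Icc 1 n

/-- `F` is a `k`-graph on `[n]`: a family of `k`-element subsets of `[n]`. -/
def IsKGraphOn (k n : ℕ) (F : Finset (Finset ℕ)) : Prop :=
  ∀ E ∈ F, E ⊆ vtx n ∧ E.card = k

/-- The vertex set of a hypergraph (union of its edges). -/
def vertexSet {α : Type} [DecidableEq α] (H : Finset (Finset α)) : Finset α := H.sup id

/-- The degree of a vertex: the number of edges containing it. -/
def vdeg {α : Type} [DecidableEq α] (H : Finset (Finset α)) (v : α) : ℕ :=
  (H.filter fun E => v ∈ E).card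

/-- Hypertrees, defined recursively: a single edge is a hypertree, and a hypertree grows
by adding a new leaf edge `E` whose intersection with the current vertex set equals its
intersection with some existing (parent) edge `F`. -/
inductive IsHypertree {α : Type} [DecidableEq α] : Finset (Finset α) → Prop
  | single (E : Finset α) : IsHypertree {E}
  | grow {H : Finset (Finset α)} (E F : Finset α) (hH : IsHypertree H) (hE : E ∉ H)
      (hF : F ∈ H) (hint : E ∩ vertexSet H = E ∩ F) : IsHypertree (insert E H)

/-- A `k`-tree: a `k`-uniform hypertree. -/
def IsKTree {α : Type} [DecidableEq α] (k : ℕ) (H : Finset (Finset α)) : Prop :=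
  IsHypertree H ∧ ∀ E ∈ H, E.card = k

/-- A hypergraph is 2-contractible if every edge contains at least two vertices of degree 1. -/
def TwoContractible {α : Type} [DecidableEq α] (H : Finset (Finset α)) : Prop :=
  ∀ E ∈ H, 2 ≤ (E.filter fun v => vdeg H v = 1).card

/-- `S` is a cross-cut of `H`: every edge meets `S` in exactly one vertex. -/
def IsCrosscut {α : Type} [DecidableEq α] (H : Finset (Finset α)) (S : Finset α) : Prop :=
  ∀ E ∈ H, (E ∩ S).card = 1

/-- `σ` is the cross-cut number of `H`: the minimum size of a cross-cut. -/
def IsCrosscutNumber {α : Type} [DecidableEq α] (H : Finset (Finset α)) (σ : ℕ) : Prop :=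
  IsLeast {m | ∃ S : Finset α, IsCrosscut H S ∧ S.card = m} σ

/-- A hypergraph is `ℓ`-overlapping if any two distinct edges meet in at most `ℓ` vertices. -/
def Overlapping {α : Type} [DecidableEq α] (ℓ : ℕ) (H : Finset (Finset α)) : Prop :=
  ∀ E ∈ H, ∀ F ∈ H, E ≠ F → (E ∩ F).card ≤ ℓ

/-- `K` is (the edge set of) a copy of `H`, i.e. the image of `H` under a map that is
injective on the vertex set of `H`. -/
def IsCopyOf {α : Type} [DecidableEq α] (H : Finset (Finset α)) (K : Finset (Finset ℕ)) : Prop :=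
  ∃ φ : α → ℕ, Set.InjOn φ ↑(vertexSet H) ∧ K = H.image fun E => E.image φ

/-- `F` contains no subgraph isomorphic to `H`. -/
def HFree {α : Type} [DecidableEq α] (H : Finset (Finset α)) (F : Finset (Finset ℕ)) : Prop :=
  ∀ K ⊆ F, ¬ IsCopyOf H K

/-- The collection of copies of `H` in `F` (as distinct subgraphs of `F`). -/
noncomputable def copies {α : Type} [DecidableEq α] (H : Finset (Finset α))
    (F : Finset (Finset ℕ)) : Finset (Finset (Finset ℕ)) :=
  F.powerset.filter (IsCopyOf H)

/-- The number of `H`-free `k`-graphs on the vertex set `[n]`. -/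
noncomputable def forb {α : Type} [DecidableEq α] (n k : ℕ) (H : Finset (Finset α)) : ℕ :=
  (((vtx n).powersetCard k).powerset.filter (HFree H)).card

/-- `H` is a `k`-uniform linear cycle of length `ℓ`. -/
def IsLinearCycle {α : Type} [DecidableEq α] (k ℓ : ℕ) (H : Finset (Finset α)) : Prop :=
  ∃ E : ℕ → Finset α,
    (∀ i < ℓ, (E i).card = k) ∧
    (∀ i < ℓ, ∀ j < ℓ, i ≠ j → E i ≠ E j) ∧
    (∀ i < ℓ, (E i ∩ E ((i + 1) % ℓ)).card = 1) ∧
    (∀ i < ℓ, ∀ j < ℓ, i ≠ j → E i ∩ E ((i + 1) % ℓ) ≠ E j ∩ E ((j + 1) % ℓ)) ∧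
    (∀ i < ℓ, ∀ j < ℓ, i ≠ j → (i + 1) % ℓ ≠ j → (j + 1) % ℓ ≠ i → Disjoint (E i) (E j)) ∧
    H = (Finset.range ℓ).image E

/-- `(X 0, …, X (k-1))` is a `k`-partition of `F`. -/
def IsKPartition (k : ℕ) (F : Finset (Finset ℕ)) (X : Fin k → Finset ℕ) : Prop :=
  (∀ i j, i ≠ j → Disjoint (X i) (X j)) ∧ ∀ E ∈ F, ∀ i, (E ∩ X i).card = 1

/-- The `J`-projection of an edge. -/
def projJ {k : ℕ} (X : Fin k → Finset ℕ) (J : Finset (Fin k)) (E : Finset ℕ) : Finset ℕ :=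
  E ∩ J.sup X

/-- The pattern of a vertex set. -/
def pattern {k : ℕ} (X : Fin k → Finset ℕ) (D : Finset ℕ) : Finset (Fin k) :=
  Finset.univ.filter fun i => (D ∩ X i).Nonempty

/-- `MI(F)`: the patterns of intersections of pairs of distinct edges. -/
noncomputable def MI {k : ℕ} (F : Finset (Finset ℕ)) (X : Fin k → Finset ℕ) :
    Finset (Finset (Fin k)) :=
  ((F ×ˢ F).filter fun p => p.1 ≠ p.2).image fun p => pattern X (p.1 ∩ p.2)

/-- The link of a vertex set `D` in `F`. -/
def link {α : Type} [DecidableEq α] (F : Finset (Finset α)) (D : Finset α) :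
    Finset (Finset α) :=
  (F.filter fun E => D ⊆ E).image fun E => E \ D

/-- The degree of a vertex set `D` in `F`: the size of its link. -/
def setDeg {α : Type} [DecidableEq α] (F : Finset (Finset α)) (D : Finset α) : ℕ :=
  (link F D).card

/-- A nonempty hypergraph is `s`-diverse if every vertex has degree less than `|H|/s`. -/
def SDiverse {α : Type} [DecidableEq α] (s : ℕ) (H : Finset (Finset α)) : Prop :=
  H.Nonempty ∧ ∀ v : α, s * vdeg H v < H.card

/-- `D` is `s`-strong in `F` if its link is `s`-diverse. -/
def SStrong {α : Type} [DecidableEq α] (s : ℕ) (F : Finset (Finset α)) (D : Finset α) : Prop :=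
  SDiverse s (link F D)

/-- `F`, with `k`-partition `X`, is `s`-super-homogeneous: for every `J ∈ MI(F)` and every
edge `E ∈ F`, the projection `E_J` is `s`-strong and `d_F(E_J) ≥ max{s, |F|/(2k·n^|J|)}`. -/
def SuperHomogeneous (n k s : ℕ) (F : Finset (Finset ℕ)) (X : Fin k → Finset ℕ) : Prop :=
  ∀ J ∈ MI F X, ∀ E ∈ F,
    SStrong s F (projJ X J E) ∧
    s ≤ setDeg F (projJ X J E) ∧
    (F.card : ℝ) / (2 * k * (n : ℝ) ^ J.card) ≤ (setDeg F (projJ X J E) : ℝ)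

/-- The rank of a family of subsets of `[k]`: the minimum size of a set `D ⊆ [k]` contained
in no member of the family. -/
noncomputable def rankFam (k : ℕ) (𝒥 : Finset (Finset (Fin k))) : ℕ :=
  sInf {d | ∃ D : Finset (Fin k), D.card = d ∧ ∀ J ∈ 𝒥, ¬ D ⊆ J}

/-- A family of subsets of `[k]` is of type 1 if it contains the full power set of some
`(k-2)`-set `B`. -/
def TypeOne (k : ℕ) (𝒥 : Finset (Finset (Fin k))) : Prop :=
  ∃ B : Finset (Fin k), B.card = k - 2 ∧ ∀ S ⊆ B, S ∈ 𝒥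

/-- The constant `c(k,s) = k!/(k^k·(2s(1+2^k))^(2^k))`. -/
noncomputable def cks (k s : ℕ) : ℝ :=
  (Nat.factorial k : ℝ) / ((k : ℝ) ^ k * (2 * (s : ℝ) * (1 + 2 ^ k)) ^ (2 ^ k))

/-- Degree of a set of vertices in a (uniform) hypergraph `K`: number of edges containing it. -/
def uDeg {α : Type} [DecidableEq α] (K : Finset (Finset α)) (S : Finset α) : ℕ :=
  (K.filter fun e => S ⊆ e).card

/-- A `t`-uniform hypergraph is `d`-graded if `d_K(S) ≤ d^(t-|S|)` for all `S` with
`1 ≤ |S| ≤ t`. -/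
def Graded {α : Type} [DecidableEq α] (t : ℕ) (d : ℝ) (K : Finset (Finset α)) : Prop :=
  ∀ S : Finset α, 1 ≤ S.card → S.card ≤ t → (uDeg K S : ℝ) ≤ d ^ (t - S.card)

/-- `S` is saturated by `K`: `d_K(S) = ⌊d^(t-|S|)⌋`. -/
def Saturated {α : Type} [DecidableEq α] (t : ℕ) (d : ℝ) (K : Finset (Finset α))
    (S : Finset α) : Prop :=
  uDeg K S = ⌊d ^ (t - S.card)⌋₊

/-- `S` is admissible: no nonempty subset of `S` is saturated. -/
def Admissible {α : Type} [DecidableEq α] (t : ℕ) (d : ℝ) (K : Finset (Finset α))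
    (S : Finset α) : Prop :=
  ∀ S' ⊆ S, S'.Nonempty → ¬ Saturated t d K S'

/-- `Z_K(S)`: the vertices `v` such that `S ∪ {v}` is inadmissible and `{v}` is not
saturated. -/
noncomputable def Zset {α : Type} [DecidableEq α] (t : ℕ) (d : ℝ) (K : Finset (Finset α))
    (S : Finset α) : Finset α :=
  (vertexSet K).filter fun v => ¬ Admissible t d K (insert v S) ∧ ¬ Saturated t d K {v}

/-- `ex(G,H)`: the maximum number of edges of an `H`-free subgraph of `G`. -/
noncomputable def exIn {α : Type} [DecidableEq α] (H : Finset (Finset α))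
    (G : Finset (Finset ℕ)) : ℕ :=
  (G.powerset.filter (HFree H)).sup Finset.card

/-- The probability, in the random `k`-graph `G^(k)(n,p)` (each `k`-subset of `[n]` is an
edge independently with probability `p`), of the event `A`. -/
noncomputable def probEvent (k n : ℕ) (p : ℝ) (A : Finset (Finset ℕ) → Prop) : ℝ :=
  ∑ G ∈ ((vtx n).powersetCard k).powerset.filter A,
    p ^ G.card * (1 - p) ^ (((vtx n).powersetCard k).card - G.card)

theorem peel {ι κ : Type} [Inhabited κ] (K : ι → Set κ) (θ : κ → ℝ) (hθ : ∀ x, 0 ≤ θ x)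
    (N : ℕ) : ∀ (Q : Finset ι), Q.card = N →
    ∃ Q' ⊆ Q, ∃ c : ι → κ,
      (∀ q ∈ Q', ∀ x ∈ K q, θ x ≤ ((Q'.filter fun p => x ∈ K p).card : ℝ)) ∧
      (∀ q ∈ Q, q ∉ Q' → c q ∈ K q) ∧
      ∀ x, ((Q.filter fun q => q ∉ Q' ∧ c q = x).card : ℝ) ≤ θ x := by
  induction N using Nat.strong_induction_on with
  | _ N ih =>
  intro Q hQ
  by_cases h : ∀ q ∈ Q, ∀ x ∈ K q, θ x ≤ ((Q.filter fun p => x ∈ K p).card : ℝ)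
  · refine ⟨Q, Finset.Subset.refl _, fun _ => default, h, fun q h1 h2 => absurd h1 h2, fun x => ?_⟩
    have : (Q.filter fun q => q ∉ Q ∧ (default : κ) = x) = ∅ := by
      ext q; simp; tauto
    rw [this]; simpa using hθ x
  · push Not at h
    obtain ⟨q0, hq0, x0, hx0, hlt⟩ := h
    have hlt' : (Q.filter fun p => x0 ∉ K p).card < N := by
      rw [← hQ]
      apply Finset.card_lt_card
      refine ⟨Finset.filter_subset _ _, fun hs => ?_⟩
      have := hs hq0
      simp at this
      exact this.2 hx0
    obtain ⟨Q', hsub, c, h1, h2, h3⟩ := ih _ hlt' (Q.filter fun p => x0 ∉ K p) rfl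
    refine ⟨Q', hsub.trans (Finset.filter_subset _ _), fun q => if x0 ∈ K q then x0 else c q, h1, ?_, ?_⟩
    · intro q hq hq'
      by_cases hx : x0 ∈ K q
      · simp [hx]
      · simp only [hx, if_false]
        exact h2 q (by simp [hq, hx]) hq'
    · intro x
      by_cases hx : x = x0
      · subst hx
        refine le_trans ?_ hlt.le
        norm_cast
        apply Finset.card_le_card
        intro q
        simp only [Finset.mem_filter]
        rintro ⟨hq, hq', hc⟩
        refine ⟨hq, ?_⟩
        by_contra hx
        simp only [hx, if_false] at hc
        have := h2 q (by simp [hq, hx]) hq'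
        rw [hc] at this
        exact hx this
      · refine le_trans ?_ (h3 x)
        norm_cast
        apply Finset.card_le_card
        intro q
        simp only [Finset.mem_filter]
        rintro ⟨hq, hq', hc⟩
        by_cases hx' : x0 ∈ K q
        · simp only [hx', if_true] at hc; exact absurd hc.symm hx
        · simp only [hx', if_false] at hc
          exact ⟨⟨hq, hx'⟩, hq', hc⟩

/-- Functions with values in `X` on `V`, and zero off `V`. -/
noncomputable def funs {α : Type} [DecidableEq α] (V : Finset α) (X : Finset ℕ) :
    Finset (α → ℕ) :=
  (V.pi fun _ => X).image fun g v => if h : v ∈ V then g v h else 0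

theorem mem_funs {α : Type} [DecidableEq α] {V : Finset α} {X : Finset ℕ} {f : α → ℕ} :
    f ∈ funs V X ↔ (∀ v ∈ V, f v ∈ X) ∧ ∀ v, v ∉ V → f v = 0 := by
  unfold funs
  simp only [Finset.mem_image, Finset.mem_pi]
  constructor
  · rintro ⟨g, hg, rfl⟩
    refine ⟨fun v hv => ?_, fun v hv => ?_⟩
    · simpa [hv] using hg v hv
    · simp [hv]
  · rintro ⟨h1, h2⟩
    refine ⟨fun v _ => f v, fun v hv => h1 v hv, ?_⟩
    ext v
    by_cases hv : v ∈ V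
    · simp [hv]
    · simp [hv, h2 v hv]

theorem card_funs_le {α : Type} [DecidableEq α] (V : Finset α) (X : Finset ℕ) :
    (funs V X).card ≤ X.card ^ V.card := by
  unfold funs
  refine Finset.card_image_le.trans ?_
  simp

theorem mem_vertexSet {α : Type} [DecidableEq α] {H : Finset (Finset α)} {v : α} :
    v ∈ vertexSet H ↔ ∃ E ∈ H, v ∈ E := by
  simp [vertexSet, Finset.mem_sup]

theorem vertexSet_insert {α : Type} [DecidableEq α] (H : Finset (Finset α)) (E : Finset α) :
    vertexSet (insert E H) = E ∪ vertexSet H := by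
  simp [vertexSet]

theorem embed_count {α : Type} [DecidableEq α] (n : ℕ) (L : ℝ) (hL : 0 ≤ L)
    (H : Finset (Finset α))
    (P : Finset α → (α → ℕ) → Prop) (R : α → ℕ → Prop)
    (hcongr : ∀ E f g, (∀ v ∈ E, f v = g v) → P E f → P E g)
    (hinj : ∀ E ∈ H, ∀ f, P E f → Set.InjOn f (E : Set α))
    (hR : ∀ E ∈ H, ∀ f, P E f → ∀ v ∈ E, R v (f v))
    (hext : ∀ E ∈ H, ∀ V0 : Finset α, V0 ⊆ vertexSet H → ∀ ψ : α → ℕ, (∀ w ∈ V0, R w (ψ w)) →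
      (V0 = ∅ ∨ ∃ F ∈ H, F ≠ E ∧ P F ψ ∧ E ∩ V0 = E ∩ F) →
      L * (n:ℝ)^(E \ V0).card ≤ n * (((funs (E \ V0) (vtx n)).filter (fun f =>
        P E (fun v => if v ∈ V0 then ψ v else f v) ∧ ∀ v ∈ E \ V0, ∀ w ∈ V0, f v ≠ ψ w)).card : ℝ))
    (H' : Finset (Finset α)) (hH' : IsHypertree H') : H' ⊆ H →
    L ^ H'.card * (n:ℝ) ^ (vertexSet H').card ≤ (n:ℝ) ^ H'.card *
      (((funs (vertexSet H') (vtx n)).filter (fun φ =>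
        Set.InjOn φ (vertexSet H' : Set α) ∧ ∀ E ∈ H', P E φ)).card : ℝ) := by
  induction hH' with
  | single E =>
    intro hsub
    have hE : E ∈ H := hsub (by simp)
    have := hext E hE ∅ (by simp) (fun _ => 0) (by simp) (Or.inl rfl)
    have hv : vertexSet {E} = E := by simp [vertexSet]
    rw [hv]
    simp only [Finset.card_singleton, pow_one]
    simp only [Finset.sdiff_empty, Finset.notMem_empty, if_false] at this
    refine this.trans ?_
    apply mul_le_mul_of_nonneg_left _ (Nat.cast_nonneg n)
    norm_cast
    apply Finset.card_le_card
    intro x hx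
    rw [Finset.mem_filter] at hx ⊢
    refine ⟨hx.1, hinj E hE _ hx.2.1, ?_⟩
    intro E' hE'
    rw [Finset.mem_singleton] at hE'
    subst hE'
    exact hx.2.1
  | @grow H0 E F hH0 hE hF hint ih =>
    intro hsub
    have hEH : E ∈ H := hsub (by simp)
    have hsub0 : H0 ⊆ H := fun x hx => hsub (by simp [hx])
    have ih := ih hsub0
    rw [Finset.card_insert_of_notMem hE, vertexSet_insert]
    set V0 := vertexSet H0 with hV0
    have hcard : (E ∪ V0).card = V0.card + (E \ V0).card := by
      rw [← Finset.sdiff_union_self_eq_union, Finset.card_union_of_disjoint Finset.sdiff_disjoint, add_comm]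
    set S0 := (funs V0 (vtx n)).filter (fun φ =>
        Set.InjOn φ (V0 : Set α) ∧ ∀ E ∈ H0, P E φ) with hS0
    set X : (α → ℕ) → Finset (α → ℕ) := fun ψ => (funs (E \ V0) (vtx n)).filter (fun f =>
        P E (fun v => if v ∈ V0 then ψ v else f v) ∧ ∀ v ∈ E \ V0, ∀ w ∈ V0, f v ≠ ψ w) with hX
    set S1 := (funs (E ∪ V0) (vtx n)).filter (fun φ =>
        Set.InjOn φ ((E ∪ V0 : Finset α) : Set α) ∧ ∀ E' ∈ insert E H0, P E' φ) with hS1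
    have hXψ : ∀ ψ ∈ S0, L * (n:ℝ)^(E \ V0).card ≤ n * ((X ψ).card : ℝ) := by
      intro ψ hψ
      simp only [hS0, Finset.mem_filter] at hψ
      have key := hext E hEH V0 ?_ ψ ?_ ?_
      · simp only [hX]
        convert key using 5
      · intro v hv
        rw [hV0, mem_vertexSet] at hv
        obtain ⟨E', h1, h2⟩ := hv
        exact mem_vertexSet.2 ⟨E', hsub0 h1, h2⟩
      · intro w hw
        rw [hV0, mem_vertexSet] at hw
        obtain ⟨E', h1, h2⟩ := hw
        exact hR E' (hsub0 h1) ψ (hψ.2.2 E' h1) w h2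
      · exact Or.inr ⟨F, hsub0 hF, fun h => hE (h ▸ hF), hψ.2.2 F hF, hint⟩
    have hle : ∑ ψ ∈ S0, (X ψ).card ≤ S1.card := by
      rw [← Finset.card_sigma]
      apply Finset.card_le_card_of_injOn (fun p => fun v => if v ∈ V0 then p.1 v else p.2 v)
      · rintro ⟨ψ, f⟩ hp
        simp only [Finset.coe_sigma, Set.mem_sigma_iff, Finset.mem_coe, hS0, hX, Finset.mem_filter, mem_funs] at hp
        obtain ⟨⟨⟨a1, a2⟩, a3, a4⟩, ⟨b1, b2⟩, b3, b4⟩ := hp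
        simp only [hS1, Finset.mem_coe, Finset.mem_filter, mem_funs]
        refine ⟨⟨?_, ?_⟩, ?_, ?_⟩
        · intro v hv
          by_cases h : v ∈ V0
          · simpa [h] using a1 v h
          · simp only [h, if_false]
            apply b1
            simp at hv ⊢; tauto
        · intro v hv
          simp only [Finset.mem_union, not_or] at hv
          simp only [hv.2, if_false]
          apply b2; simp [hv.1]
        · intro v hv w hw hvw
          simp only [Finset.coe_union, Set.mem_union, Finset.mem_coe] at hv hw
          by_cases h : v ∈ V0 <;> by_cases h' : w ∈ V0
          · simp only [h, h', if_true] at hvw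
            exact a3 h h' hvw
          · simp only [h, h', if_true, if_false] at hvw
            exact absurd hvw.symm (b4 w (by simp; tauto) v h)
          · simp only [h, h', if_true, if_false] at hvw
            exact absurd hvw (b4 v (by simp; tauto) w h')
          · have := hinj E hEH _ b3
            exact this (by simp; tauto) (by simp; tauto) hvw
        · intro E' hE'
          rw [Finset.mem_insert] at hE'
          rcases hE' with rfl | hE'
          · exact b3
          · refine hcongr E' ψ _ ?_ (a4 E' hE')
            intro v hv
            have : v ∈ V0 := mem_vertexSet.2 ⟨E', hE', hv⟩
            simp [this]
      · rintro ⟨ψ, f⟩ hp ⟨ψ', f'⟩ hp' heq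
        simp only [Finset.coe_sigma, Set.mem_sigma_iff, Finset.mem_coe, hS0, hX, Finset.mem_filter, mem_funs] at hp hp'
        have e : ∀ v, (if v ∈ V0 then ψ v else f v) = if v ∈ V0 then ψ' v else f' v := fun v => congrFun heq v
        have e1 : ψ = ψ' := by
          ext v
          by_cases h : v ∈ V0
          · simpa [h] using e v
          · rw [hp.1.1.2 v h, hp'.1.1.2 v h]
        have e2 : f = f' := by
          ext v
          by_cases h : v ∈ V0
          · rw [hp.2.1.2 v (by simp [h]), hp'.2.1.2 v (by simp [h])]
          · simpa [h] using e v
        subst e1; subst e2; rfl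
    rw [hcard, pow_add, pow_add, pow_add, pow_one, pow_one]
    calc L ^ H0.card * L * ((n:ℝ) ^ V0.card * (n:ℝ) ^ (E \ V0).card)
        = (L ^ H0.card * (n:ℝ) ^ V0.card) * (L * (n:ℝ) ^ (E \ V0).card) := by ring
      _ ≤ ((n:ℝ) ^ H0.card * (S0.card : ℝ)) * (L * (n:ℝ) ^ (E \ V0).card) := by
          gcongr
      _ = (n:ℝ) ^ H0.card * ∑ ψ ∈ S0, (L * (n:ℝ) ^ (E \ V0).card) := by
          rw [Finset.sum_const, nsmul_eq_mul]; ring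
      _ ≤ (n:ℝ) ^ H0.card * ∑ ψ ∈ S0, (n * ((X ψ).card : ℝ)) := by
          apply mul_le_mul_of_nonneg_left _ (by positivity)
          exact Finset.sum_le_sum hXψ
      _ = (n:ℝ) ^ H0.card * n * ((∑ ψ ∈ S0, (X ψ).card : ℕ) : ℝ) := by
          rw [← Finset.mul_sum]; push_cast; ring
      _ ≤ (n:ℝ) ^ H0.card * n * (S1.card : ℝ) := by
          gcongr

theorem copies_lower {α : Type} [DecidableEq α] (n : ℕ) (hn : 0 < n) (L : ℝ) (hL : 0 ≤ L)
    (H : Finset (Finset α)) (hH : IsHypertree H) (F : Finset (Finset ℕ))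
    (hst : H.card ≤ (vertexSet H).card)
    (P : Finset α → (α → ℕ) → Prop) (R : α → ℕ → Prop)
    (hcongr : ∀ E f g, (∀ v ∈ E, f v = g v) → P E f → P E g)
    (hinj : ∀ E ∈ H, ∀ f, P E f → Set.InjOn f (E : Set α))
    (himg : ∀ E ∈ H, ∀ f, P E f → E.image f ∈ F)
    (hR : ∀ E ∈ H, ∀ f, P E f → ∀ v ∈ E, R v (f v))
    (hext : ∀ E ∈ H, ∀ V0 : Finset α, V0 ⊆ vertexSet H → ∀ ψ : α → ℕ, (∀ w ∈ V0, R w (ψ w)) →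
      (V0 = ∅ ∨ ∃ F ∈ H, F ≠ E ∧ P F ψ ∧ E ∩ V0 = E ∩ F) →
      L * (n:ℝ)^(E \ V0).card ≤ n * (((funs (E \ V0) (vtx n)).filter (fun f =>
        P E (fun v => if v ∈ V0 then ψ v else f v) ∧ ∀ v ∈ E \ V0, ∀ w ∈ V0, f v ≠ ψ w)).card : ℝ)) :
    L ^ H.card * (n:ℝ) ^ ((vertexSet H).card - H.card) ≤
      ((vertexSet H).card : ℝ) ^ (vertexSet H).card * ((copies H F).card : ℝ) := by
  have h := embed_count n L hL H P R hcongr hinj hR hext H hH (Finset.Subset.refl _)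
  set V := vertexSet H with hV
  set S := (funs V (vtx n)).filter (fun φ =>
        Set.InjOn φ (V : Set α) ∧ ∀ E ∈ H, P E φ) with hS
  have h2 : S.card ≤ (V.card ^ V.card) * (copies H F).card := by
    apply Finset.card_le_mul_card_image_of_maps_to (f := fun φ => H.image fun E => E.image φ)
    · intro φ hφ
      simp only [hS, Finset.mem_filter] at hφ
      simp only [copies, Finset.mem_filter, Finset.mem_powerset]
      refine ⟨?_, φ, hφ.2.1, rfl⟩
      intro e he
      obtain ⟨E, hE, rfl⟩ := Finset.mem_image.1 he
      exact himg E hE φ (hφ.2.2 E hE)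
    · intro K hK
      by_cases hne : ∃ φ ∈ S, (H.image fun E => E.image φ) = K
      · obtain ⟨φ0, hφ0, hK0⟩ := hne
        have hsub : (S.filter fun φ => (H.image fun E => E.image φ) = K) ⊆ funs V (V.image φ0) := by
          intro φ hφ
          simp only [Finset.mem_filter, hS, mem_funs] at hφ
          rw [mem_funs]
          refine ⟨fun v hv => ?_, hφ.1.1.2⟩
          rw [hV, mem_vertexSet] at hv
          obtain ⟨E, hE, hvE⟩ := hv
          have : E.image φ ∈ K := by
            rw [← hφ.2]; exact Finset.mem_image_of_mem _ hE
          rw [← hK0] at this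
          obtain ⟨E', hE', hEE⟩ := Finset.mem_image.1 this
          have h3 : φ v ∈ E'.image φ0 := by
            have hm : φ v ∈ E.image φ := Finset.mem_image_of_mem _ hvE
            rw [← hEE] at hm; exact hm
          obtain ⟨w, hw, hwv⟩ := Finset.mem_image.1 h3
          exact Finset.mem_image.2 ⟨w, mem_vertexSet.2 ⟨E', hE', hw⟩, hwv⟩
        refine (Finset.card_le_card hsub).trans ((card_funs_le _ _).trans ?_)
        exact Nat.pow_le_pow_left Finset.card_image_le _
      · have : (S.filter fun φ => (H.image fun E => E.image φ) = K) = ∅ := by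
          apply Finset.filter_eq_empty_iff.2
          intro φ hφ hc
          exact hne ⟨φ, hφ, hc⟩
        rw [this]; simp
  have hnpos : (0:ℝ) < (n:ℝ) ^ H.card := by positivity
  have h3 : (S.card : ℝ) ≤ (V.card : ℝ) ^ V.card * ((copies H F).card : ℝ) := by exact_mod_cast h2
  have h4 : (n:ℝ) ^ V.card = (n:ℝ) ^ H.card * (n:ℝ) ^ (V.card - H.card) := by
    rw [← pow_add]; congr 1; omega
  rw [h4] at h
  have h5 : (n:ℝ) ^ H.card * (L ^ H.card * (n:ℝ) ^ (V.card - H.card)) ≤ (n:ℝ) ^ H.card * (S.card : ℝ) := by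
    linarith
  exact (le_of_mul_le_mul_left h5 hnpos).trans h3

theorem ext_items {α ι : Type} [DecidableEq α] (n : ℕ) (X Y U : Finset α) (hU : X ∪ Y = U)
    (hXY : Disjoint X Y)
    (Q : Finset ι) (Z : ι → Finset ℕ) (g : ι → α → ℕ)
    (hZ : ∀ q ∈ Q, (Z q).card = X.card) (hZn : ∀ q ∈ Q, Z q ⊆ vtx n)
    (hg : ∀ q ∈ Q, ∀ y ∈ Y, g q y ∈ vtx n)
    (hinj : ∀ q ∈ Q, ∀ q' ∈ Q, Z q = Z q' → (∀ y ∈ Y, g q y = g q' y) → q = q')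
    (Pr : (α → ℕ) → Prop) {_ : DecidablePred Pr}
    (hPr : ∀ q ∈ Q, ∀ f : α → ℕ, X.image f = Z q → (∀ y ∈ Y, f y = g q y) → Pr f) :
    Q.card ≤ ((funs U (vtx n)).filter Pr).card := by
  have hex : ∀ q ∈ Q, ∃ f : α → ℕ, X.image f = Z q ∧ (∀ y ∈ Y, f y = g q y) ∧
      f ∈ funs U (vtx n) := by
    intro q hq
    have e := Finset.equivOfCardEq (hZ q hq).symm
    have hX : ∀ v (h : v ∈ X), (if h : v ∈ X then (e ⟨v, h⟩ : ℕ) else if v ∈ Y then g q v else 0) = e ⟨v, h⟩ := by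
      intro v h; simp [h]
    have hY : ∀ v ∈ Y, (if h : v ∈ X then (e ⟨v, h⟩ : ℕ) else if v ∈ Y then g q v else 0) = g q v := by
      intro v h
      have : v ∉ X := fun h' => (Finset.disjoint_left.1 hXY h' h)
      simp [h, this]
    refine ⟨fun v => if h : v ∈ X then (e ⟨v, h⟩ : ℕ) else if v ∈ Y then g q v else 0, ?_, hY, ?_⟩
    · ext z
      simp only [Finset.mem_image]
      constructor
      · rintro ⟨v, hv, rfl⟩
        rw [hX v hv]; exact (e ⟨v, hv⟩).2
      · intro hz
        refine ⟨e.symm ⟨z, hz⟩, (e.symm ⟨z, hz⟩).2, ?_⟩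
        rw [hX _ (e.symm ⟨z, hz⟩).2]
        simp
    · rw [mem_funs]
      refine ⟨fun v hv => ?_, fun v hv => ?_⟩
      · rw [← hU, Finset.mem_union] at hv
        rcases hv with hv | hv
        · rw [hX v hv]; exact hZn q hq (e ⟨v, hv⟩).2
        · rw [hY v hv]; exact hg q hq v hv
      · rw [← hU, Finset.mem_union, not_or] at hv
        simp [hv.1, hv.2]
  choose! f hf1 hf2 hf3 using hex
  apply Finset.card_le_card_of_injOn f
  · intro q hq
    rw [Finset.mem_coe, Finset.mem_filter]
    exact ⟨hf3 q hq, hPr q hq _ (hf1 q hq) (hf2 q hq)⟩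
  · intro q hq q' hq' h
    apply hinj q hq q' hq'
    · rw [← hf1 q hq, ← hf1 q' hq', h]
    · intro y hy
      rw [← hf2 q hq y hy, ← hf2 q' hq' y hy, h]

theorem card_vtx (n : ℕ) : (vtx n).card = n := by simp [vtx]

theorem cnt_super (n r : ℕ) (Y : Finset ℕ) (G : Finset (Finset ℕ))
    (hG : ∀ D ∈ G, D ⊆ vtx n ∧ D.card = r ∧ Y ⊆ D) : G.card ≤ n ^ (r - Y.card) := by
  have h : G.card ≤ ((vtx n).powersetCard (r - Y.card)).card := by
    apply Finset.card_le_card_of_injOn (fun D => D \ Y)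
    · intro D hD
      obtain ⟨h1, h2, h3⟩ := hG D hD
      simp only [Finset.mem_coe, Finset.mem_powersetCard]
      refine ⟨Finset.sdiff_subset.trans h1, ?_⟩
      rw [Finset.card_sdiff_of_subset h3, h2]
    · intro D hD D' hD' h
      obtain ⟨h1, h2, h3⟩ := hG D hD
      obtain ⟨h1', h2', h3'⟩ := hG D' hD'
      simp only at h
      rw [← Finset.sdiff_union_of_subset h3, h, Finset.sdiff_union_of_subset h3']
  refine h.trans ?_
  rw [Finset.card_powersetCard, card_vtx]
  exact Nat.choose_le_pow _ _

theorem avoid {ι : Type} (Q : Finset ι) (W : Finset ℕ) (bad : ι → ℕ → Prop) (b : ℝ)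
    {_ : ∀ w, DecidablePred fun q => bad q w} {_ : DecidablePred fun q => ∀ w ∈ W, ¬ bad q w}
    (hb : ∀ w ∈ W, ((Q.filter fun q => bad q w).card : ℝ) ≤ b) :
    (Q.card : ℝ) - W.card * b ≤ ((Q.filter fun q => ∀ w ∈ W, ¬ bad q w).card : ℝ) := by
  have h1 : Q ⊆ (Q.filter fun q => ∀ w ∈ W, ¬ bad q w) ∪ W.biUnion (fun w => Q.filter fun q => bad q w) := by
    intro q hq
    by_cases h : ∀ w ∈ W, ¬ bad q w
    · exact Finset.mem_union_left _ (by rw [Finset.mem_filter]; exact ⟨hq, h⟩)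
    · push Not at h
      obtain ⟨w, hw, hbad⟩ := h
      apply Finset.mem_union_right
      rw [Finset.mem_biUnion]
      exact ⟨w, hw, by rw [Finset.mem_filter]; exact ⟨hq, hbad⟩⟩
  have h2 := (Finset.card_le_card h1).trans (Finset.card_union_le _ _)
  have h3 : ((W.biUnion (fun w => Q.filter fun q => bad q w)).card : ℝ) ≤ W.card * b := by
    calc ((W.biUnion (fun w => Q.filter fun q => bad q w)).card : ℝ)
        ≤ ((∑ w ∈ W, (Q.filter fun q => bad q w).card : ℕ) : ℝ) := by exact_mod_cast Finset.card_biUnion_le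
      _ = ∑ w ∈ W, ((Q.filter fun q => bad q w).card : ℝ) := by push_cast; rfl
      _ ≤ ∑ w ∈ W, b := Finset.sum_le_sum hb
      _ = W.card * b := by simp
  have h4 : (Q.card : ℝ) ≤ ((Q.filter fun q => ∀ w ∈ W, ¬ bad q w).card : ℝ) + ((W.biUnion (fun w => Q.filter fun q => bad q w)).card : ℝ) := by
    exact_mod_cast h2
  linarith

theorem merge_image {α : Type} [DecidableEq α] (C V0 : Finset α) (ψ f : α → ℕ) :
    C.image (fun v => if v ∈ V0 then ψ v else f v) = (C ∩ V0).image ψ ∪ (C \ V0).image f := by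
  ext z
  simp only [Finset.mem_image, Finset.mem_union, Finset.mem_inter, Finset.mem_sdiff]
  constructor
  · rintro ⟨v, hv, rfl⟩
    by_cases h : v ∈ V0
    · left; exact ⟨v, ⟨hv, h⟩, by simp [h]⟩
    · right; exact ⟨v, ⟨hv, h⟩, by simp [h]⟩
  · rintro (⟨v, ⟨hv, h⟩, rfl⟩ | ⟨v, ⟨hv, h⟩, rfl⟩)
    · exact ⟨v, hv, by simp [h]⟩
    · exact ⟨v, hv, by simp [h]⟩

theorem two_private {α : Type} [DecidableEq α] {H : Finset (Finset α)} (h2 : TwoContractible H)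
    {E : Finset α} (hE : E ∈ H) : ∃ u ∈ E, ∃ v ∈ E, u ≠ v ∧ ∀ F ∈ H, F ≠ E → u ∉ F ∧ v ∉ F := by
  have h := h2 E hE
  have h' : 1 < (E.filter fun v => vdeg H v = 1).card := h
  rw [Finset.one_lt_card] at h'
  obtain ⟨u, hu, v, hv, huv⟩ := h'
  rw [Finset.mem_filter] at hu hv
  have key : ∀ w ∈ E, vdeg H w = 1 → ∀ F ∈ H, F ≠ E → w ∉ F := by
    intro w hw hd F hF hne hwF
    unfold vdeg at hd
    rw [Finset.card_eq_one] at hd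
    obtain ⟨x, hx⟩ := hd
    have e1 : E ∈ H.filter fun E => w ∈ E := by rw [Finset.mem_filter]; exact ⟨hE, hw⟩
    have e2 : F ∈ H.filter fun E => w ∈ E := by rw [Finset.mem_filter]; exact ⟨hF, hwF⟩
    rw [hx, Finset.mem_singleton] at e1 e2
    exact hne (e2.trans e1.symm)
  exact ⟨u, hu.1, v, hv.1, huv, fun F hF hne => ⟨key u hu.1 hu.2 F hF hne, key v hv.1 hv.2 F hF hne⟩⟩

theorem inter_card_le {α : Type} [DecidableEq α] {H : Finset (Finset α)} (h2 : TwoContractible H)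
    {E F : Finset α} (hE : E ∈ H) (hF : F ∈ H) (hne : F ≠ E) : (E ∩ F).card + 2 ≤ E.card := by
  obtain ⟨u, hu, v, hv, huv, h⟩ := two_private h2 hE
  obtain ⟨h3, h4⟩ := h F hF hne
  have : (E ∩ F) ∪ {u, v} ⊆ E := by
    intro x
    simp only [Finset.mem_union, Finset.mem_inter, Finset.mem_insert, Finset.mem_singleton]
    rintro (h | rfl | rfl)
    · exact h.1
    · exact hu
    · exact hv
  have h5 := Finset.card_le_card this
  rw [Finset.card_union_of_disjoint, Finset.card_pair huv] at h5
  · exact h5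
  · rw [Finset.disjoint_left]
    intro x hx hx'
    simp only [Finset.mem_inter, Finset.mem_insert, Finset.mem_singleton] at hx hx'
    rcases hx' with rfl | rfl
    · exact h3 hx.2
    · exact h4 hx.2

theorem edges_le_vertices {α : Type} [DecidableEq α] {H : Finset (Finset α)}
    (h2 : TwoContractible H) : H.card ≤ (vertexSet H).card := by
  have : ∀ E ∈ H, ∃ u ∈ E, ∀ F ∈ H, F ≠ E → u ∉ F := by
    intro E hE
    obtain ⟨u, hu, v, hv, huv, h⟩ := two_private h2 hE
    exact ⟨u, hu, fun F hF hne => (h F hF hne).1⟩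
  by_cases hα : Nonempty α
  · choose! u hu hu' using this
    apply Finset.card_le_card_of_injOn u
    · intro E hE
      exact mem_vertexSet.2 ⟨E, hE, hu E hE⟩
    · intro E hE E' hE' h
      by_contra hne
      exact hu' E hE E' hE' (fun h => hne h.symm) (h ▸ hu E' hE')
  · have : H = ∅ := by
      by_contra hne
      obtain ⟨E, hE⟩ := Finset.nonempty_iff_ne_empty.2 hne
      obtain ⟨u, -⟩ := this E hE
      exact hα ⟨u⟩
    simp [this]

theorem caseI {α : Type} [DecidableEq α] (k n : ℕ) (hk : 4 ≤ k) (hn : 0 < n)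
    (H : Finset (Finset α)) (hH : IsKTree k H) (h2 : TwoContractible H)
    (F G : Finset (Finset ℕ)) (hF : IsKGraphOn k n F) (hGF : G ⊆ F) (hne : G.Nonempty)
    (d : ℝ) (hd : 0 ≤ d)
    (hdeg : ∀ e ∈ G, ∀ A ⊆ e, A.card + 2 ≤ k →
      d * (n:ℝ) ^ (k - 1 - A.card) ≤ ((G.filter fun e' => A ⊆ e').card : ℝ))
    (hcod : ∀ e ∈ G, ∀ A ⊆ e, A.card + 1 = k →
      2 * (vertexSet H).card * k + 1 ≤ (G.filter fun e' => A ⊆ e').card) :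
    (d / 2) ^ H.card * (n:ℝ) ^ ((vertexSet H).card - H.card) ≤
      ((vertexSet H).card : ℝ) ^ (vertexSet H).card * ((copies H F).card : ℝ) := by
  refine copies_lower n hn (d/2) (by positivity) H hH.1 F (edges_le_vertices h2)
    (fun E f => Set.InjOn f (E : Set α) ∧ E.image f ∈ G) (fun _ _ => True) ?_ ?_ ?_ ?_ ?_
  · intro E f g hfg ⟨h1, h2⟩
    refine ⟨fun v hv w hw h => h1 hv hw (by rw [hfg v hv, hfg w hw, h]), ?_⟩
    rw [← Finset.image_congr (fun v hv => hfg v hv)]; exact h2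
  · intro E _ f h; exact h.1
  · intro E _ f h; exact hGF h.2
  · intros; trivial
  intro E hE V0 hV0 ψ _ hpar
  have hEk : E.card = k := hH.2 E hE
  
  have hA : ((E ∩ V0).image ψ).card = (E ∩ V0).card ∧ (E ∩ V0).card + 2 ≤ k ∧
      ∃ e ∈ G, (E ∩ V0).image ψ ⊆ e := by
    rcases hpar with rfl | ⟨F', hF', hne', ⟨hinj, himg⟩, hint⟩
    · obtain ⟨e, he⟩ := hne
      refine ⟨by simp, by simp; omega, e, he, by simp⟩
    · rw [hint]
      refine ⟨?_, ?_, _, himg, Finset.image_subset_image Finset.inter_subset_right⟩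
      · apply Finset.card_image_of_injOn
        apply hinj.mono
        simp
      · have := inter_card_le h2 hE hF' hne'; omega
  obtain ⟨hAc, hAk, e0, he0, hAe0⟩ := hA
  set A := (E ∩ V0).image ψ with hAdef
  set W := V0.image ψ \ A with hW
  have hWs : W.card ≤ (vertexSet H).card :=
    (Finset.card_le_card Finset.sdiff_subset).trans (Finset.card_image_le.trans (Finset.card_le_card hV0))
  set Q0 := G.filter fun e' => A ⊆ e' with hQ0
  have hEG : ∀ e ∈ G, e ⊆ vtx n ∧ e.card = k := fun e he => hF e (hGF he)
  have hbad : ∀ w ∈ W, ((Q0.filter fun e => w ∈ e).card : ℝ) ≤ Q0.card / (2 * (vertexSet H).card) := by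
    intro w hw
    have hwA : w ∉ A := (Finset.mem_sdiff.1 hw).2
    have hspos : 0 < (vertexSet H).card := lt_of_lt_of_le (Finset.card_pos.2 ⟨w, hw⟩) hWs
    have key : (Q0.filter fun e => w ∈ e).card * (2 * (vertexSet H).card * k) ≤ Q0.card * k := by
      apply Finset.card_mul_le_card_mul (fun e e' => w ∉ e' ∧ e.erase w ⊆ e')
      · intro e he
        rw [Finset.mem_filter, hQ0, Finset.mem_filter] at he
        obtain ⟨⟨heG, hAe⟩, hwe⟩ := he
        have hek := (hEG e heG).2
        have h1 := hcod e heG (e.erase w) (Finset.erase_subset _ _) (by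
          rw [Finset.card_erase_of_mem hwe, hek]; omega)
        have h3 : (G.filter fun e' => e.erase w ⊆ e') ⊆ insert e (Finset.bipartiteAbove (fun e e' : Finset ℕ => w ∉ e' ∧ e.erase w ⊆ e') Q0 e) := by
          intro e' he'
          rw [Finset.mem_filter] at he'
          rw [Finset.mem_insert, Finset.mem_bipartiteAbove]
          by_cases hw' : w ∈ e'
          · left
            symm
            apply Finset.eq_of_subset_of_card_le
            · intro x hx
              by_cases hxw : x = w
              · rw [hxw]; exact hw'
              · exact he'.2 (Finset.mem_erase.2 ⟨hxw, hx⟩)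
            · rw [hek, (hEG e' he'.1).2]
          · right
            refine ⟨?_, hw', he'.2⟩
            rw [hQ0, Finset.mem_filter]
            refine ⟨he'.1, fun x hx => he'.2 (Finset.mem_erase.2 ⟨?_, hAe hx⟩)⟩
            rintro rfl; exact hwA hx
        have h4 := (Finset.card_le_card h3).trans (Finset.card_insert_le _ _)
        omega
      · intro e' he'
        rw [hQ0, Finset.mem_filter] at he'
        have hek := (hEG e' he'.1).2
        have : (Finset.bipartiteBelow (fun e e' : Finset ℕ => w ∉ e' ∧ e.erase w ⊆ e') (Q0.filter fun e => w ∈ e) e') ⊆ e'.image (fun u => insert w (e'.erase u)) := by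
          intro e he
          rw [Finset.mem_bipartiteBelow, Finset.mem_filter, hQ0, Finset.mem_filter] at he
          obtain ⟨⟨⟨heG, hAe⟩, hwe⟩, hwe', hsub⟩ := he
          have hc : (e.erase w).card = k - 1 := by
            rw [Finset.card_erase_of_mem hwe, (hEG e heG).2]
          have hc2 : (e' \ e.erase w).card = 1 := by
            rw [Finset.card_sdiff_of_subset hsub, hek, hc]; omega
          rw [Finset.card_eq_one] at hc2
          obtain ⟨u, hu⟩ := hc2
          have hu' : u ∈ e' \ e.erase w := by rw [hu]; simp
          rw [Finset.mem_sdiff] at hu'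
          rw [Finset.mem_image]
          refine ⟨u, hu'.1, ?_⟩
          have : e'.erase u = e.erase w := by
            rw [← Finset.sdiff_singleton_eq_erase, ← hu, Finset.sdiff_sdiff_eq_self hsub]
          rw [this, Finset.insert_erase hwe]
        exact (Finset.card_le_card this).trans (Finset.card_image_le.trans hek.le)
    have key2 : (Q0.filter fun e => w ∈ e).card * (2 * (vertexSet H).card) ≤ Q0.card := by
      have : (Q0.filter fun e => w ∈ e).card * (2 * (vertexSet H).card) * k ≤ Q0.card * k := by
        rw [mul_assoc]; exact key
      exact Nat.le_of_mul_le_mul_right this (by omega)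
    rw [le_div_iff₀ (by positivity)]
    exact_mod_cast key2
  set Q1 := Q0.filter fun e => ∀ w ∈ W, w ∉ e with hQ1
  have hav : (Q0.card : ℝ) - W.card * (Q0.card / (2 * (vertexSet H).card)) ≤ (Q1.card : ℝ) := by
    rw [hQ1]
    exact avoid Q0 W (fun e w => w ∈ e) _ hbad
  have hhalf : (Q0.card : ℝ) / 2 ≤ (Q1.card : ℝ) := by
    refine le_trans ?_ hav
    rcases Nat.eq_zero_or_pos (vertexSet H).card with h0 | h0
    · have : W.card = 0 := by omega
      rw [this]; simp
    · have : (W.card : ℝ) * (Q0.card / (2 * (vertexSet H).card)) ≤ Q0.card / 2 := by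
        have h1 : (W.card : ℝ) ≤ (vertexSet H).card := by exact_mod_cast hWs
        calc (W.card : ℝ) * (Q0.card / (2 * (vertexSet H).card)) ≤ (vertexSet H).card * (Q0.card / (2 * (vertexSet H).card)) := by
              gcongr
          _ = Q0.card / 2 := by
              have : ((vertexSet H).card : ℝ) ≠ 0 := by positivity
              field_simp
      linarith
  have hXc : (E \ V0).card = k - A.card := by
    have := Finset.card_sdiff_add_card_inter E V0
    omega
  have hgoal : d / 2 * (n:ℝ) ^ (E \ V0).card ≤ n * (Q1.card : ℝ) := by
    have hQ := hdeg e0 he0 A hAe0 (by omega)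
    have hpow : (n:ℝ) ^ (E \ V0).card = n * (n:ℝ) ^ (k - 1 - A.card) := by
      rw [hXc, ← pow_succ']; congr 1; omega
    rw [hpow]
    calc d / 2 * (n * (n:ℝ) ^ (k - 1 - A.card)) = n * (d * (n:ℝ) ^ (k - 1 - A.card) / 2) := by ring
      _ ≤ n * ((Q0.card : ℝ) / 2) := by gcongr
      _ ≤ n * (Q1.card : ℝ) := by gcongr
  refine hgoal.trans (mul_le_mul_of_nonneg_left (Nat.cast_le.2 ?_) (Nat.cast_nonneg n))
  refine ext_items n (E \ V0) ∅ (E \ V0) (by simp) (by simp) Q1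
    (fun e => e \ A) (fun _ _ => 0) ?_ ?_ (by simp) ?_ _ ?_
  · intro e he
    simp only [hQ1, hQ0, Finset.mem_filter] at he
    rw [Finset.card_sdiff_of_subset he.1.2, (hEG e he.1.1).2, hXc]
  · intro e he
    simp only [hQ1, hQ0, Finset.mem_filter] at he
    exact Finset.sdiff_subset.trans (hEG e he.1.1).1
  · intro e he e' he' h _
    simp only [hQ1, hQ0, Finset.mem_filter] at he he'
    rw [← Finset.sdiff_union_of_subset he.1.2, h, Finset.sdiff_union_of_subset he'.1.2]
  · intro e he f hf _
    simp only [hQ1, hQ0, Finset.mem_filter] at he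
    have him : E.image (fun v => if v ∈ V0 then ψ v else f v) = e := by
      rw [merge_image, hf, ← hAdef, Finset.union_sdiff_of_subset he.1.2]
    refine ⟨⟨?_, ?_⟩, ?_⟩
    · rw [← Finset.card_image_iff, him, hEk, (hEG e he.1.1).2]
    · rw [him]; exact he.1.1
    · intro v hv w hw h
      have h1 : f v ∈ e \ A := by rw [← hf]; exact Finset.mem_image_of_mem _ hv
      rw [Finset.mem_sdiff] at h1
      refine he.2 (f v) ?_ h1.1
      rw [hW, Finset.mem_sdiff]
      exact ⟨by rw [h]; exact Finset.mem_image_of_mem _ hw, h1.2⟩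

theorem caseIII {α : Type} [DecidableEq α] (k n : ℕ) (hk : 4 ≤ k) (hn : 0 < n)
    (H : Finset (Finset α)) (hH : IsKTree k H) (h2 : TwoContractible H)
    (F T : Finset (Finset ℕ)) (S : Finset α) (hS : IsCrosscut H S)
    (ι : α → ℕ) (hι : Set.InjOn ι (S : Set α)) (hιn : ∀ y ∈ S, ι y ∈ vtx n)
    (hT : ∀ D ∈ T, D ⊆ vtx n ∧ D.card = k - 1 ∧ ∀ y ∈ S, ι y ∉ D ∧ insert (ι y) D ∈ F)
    (hne : T.Nonempty)
    (d : ℝ) (hd : 0 ≤ d)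
    (hdeg : ∀ e ∈ T, ∀ A ⊆ e,
      d * (n:ℝ) ^ (k - 1 - A.card) ≤ ((T.filter fun e' => A ⊆ e').card : ℝ))
    (hns : 2 * ((vertexSet H).card : ℝ) ≤ d * n) :
    (d / 2) ^ H.card * (n:ℝ) ^ ((vertexSet H).card - H.card) ≤
      ((vertexSet H).card : ℝ) ^ (vertexSet H).card * ((copies H F).card : ℝ) := by
  have hES : ∀ E ∈ H, (E \ S).card = k - 1 := by
    intro E hE
    have h1 := Finset.card_sdiff_add_card_inter E S
    have h3 := hS E hE
    have h4 := hH.2 E hE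
    omega
  refine copies_lower n hn (d/2) (by positivity) H hH.1 F (edges_le_vertices h2)
    (fun E f => Set.InjOn f (E : Set α) ∧ (E \ S).image f ∈ T ∧ ∀ y ∈ E, y ∈ S → f y = ι y)
    (fun v m => (v ∈ S → m = ι v) ∧ (v ∉ S → ∀ y ∈ S, m ≠ ι y)) ?_ ?_ ?_ ?_ ?_
  · intro E f g hfg ⟨h1, h2, h3⟩
    refine ⟨fun v hv w hw h => h1 hv hw (by rw [hfg v hv, hfg w hw, h]), ?_, ?_⟩
    · rw [← Finset.image_congr (fun v hv => hfg v (Finset.sdiff_subset hv))]; exact h2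
    · intro y hy hyS; rw [← hfg y hy]; exact h3 y hy hyS
  · intro E _ f h; exact h.1
  · intro E hE f ⟨h1, h3, h4⟩
    have hc := hS E hE
    rw [Finset.card_eq_one] at hc
    obtain ⟨y, hy⟩ := hc
    have hy' : y ∈ E ∩ S := by rw [hy]; simp
    rw [Finset.mem_inter] at hy'
    have : E.image f = insert (ι y) ((E \ S).image f) := by
      have hEe : insert y (E \ S) = E := by
        rw [Finset.insert_eq, ← hy, Finset.union_comm, Finset.sdiff_union_inter]
      rw [← h4 y hy'.1 hy'.2, ← Finset.image_insert, hEe]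
    rw [this]
    exact ((hT _ h3).2.2 y hy'.2).2
  · intro E hE f ⟨h1, h3, h4⟩ v hv
    refine ⟨fun hvS => h4 v hv hvS, fun hvS y hy h => ?_⟩
    apply ((hT _ h3).2.2 y hy).1
    rw [← h]
    exact Finset.mem_image_of_mem _ (Finset.mem_sdiff.2 ⟨hv, hvS⟩)
  intro E hE V0 hV0 ψ hR hpar
  have hEk : E.card = k := hH.2 E hE
  set C := E \ S with hC
  have hCk : C.card = k - 1 := hES E hE
  have hA : ((C ∩ V0).image ψ).card = (C ∩ V0).card ∧ (C ∩ V0).card + 2 ≤ k ∧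
      ∃ e ∈ T, (C ∩ V0).image ψ ⊆ e := by
    rcases hpar with rfl | ⟨F', hF', hne', ⟨hinj, himg, -⟩, hint⟩
    · obtain ⟨e, he⟩ := hne
      refine ⟨by simp, by simp; omega, e, he, by simp⟩
    · have hsub : C ∩ V0 ⊆ E ∩ F' := by
        rw [← hint]; exact Finset.inter_subset_inter Finset.sdiff_subset (Finset.Subset.refl _)
      refine ⟨?_, ?_, _, himg, Finset.image_subset_image ?_⟩
      · apply Finset.card_image_of_injOn
        apply hinj.mono
        intro v hv
        exact (Finset.mem_inter.1 (hsub hv)).2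
      · have := inter_card_le h2 hE hF' hne'
        have := Finset.card_le_card hsub; omega
      · intro v hv
        rw [Finset.mem_sdiff]
        exact ⟨(Finset.mem_inter.1 (hsub hv)).2, (Finset.mem_sdiff.1 (Finset.mem_inter.1 hv).1).2⟩
  obtain ⟨hAc, hAk, e0, he0, hAe0⟩ := hA
  set A := (C ∩ V0).image ψ with hAdef
  set W := V0.image ψ \ A with hW
  have hWs : W.card ≤ (vertexSet H).card :=
    (Finset.card_le_card Finset.sdiff_subset).trans (Finset.card_image_le.trans (Finset.card_le_card hV0))
  set Q0 := T.filter fun e' => A ⊆ e' with hQ0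
  have hbad : ∀ w ∈ W, ((Q0.filter fun e => w ∈ e).card : ℝ) ≤ (n:ℝ) ^ (k - 2 - A.card) := by
    intro w hw
    have hwA : w ∉ A := (Finset.mem_sdiff.1 hw).2
    have := cnt_super n (k-1) (insert w A) (Q0.filter fun e => w ∈ e) (by
      intro D hD
      simp only [hQ0, Finset.mem_filter] at hD
      refine ⟨(hT D hD.1.1).1, (hT D hD.1.1).2.1, ?_⟩
      exact Finset.insert_subset hD.2 hD.1.2)
    rw [Finset.card_insert_of_notMem hwA] at this
    have e : k - 1 - (A.card + 1) = k - 2 - A.card := by omega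
    rw [e] at this
    exact_mod_cast this
  set Q1 := Q0.filter fun e => ∀ w ∈ W, w ∉ e with hQ1
  have hav : (Q0.card : ℝ) - W.card * ((n:ℝ) ^ (k - 2 - A.card)) ≤ (Q1.card : ℝ) := by
    rw [hQ1]
    exact avoid Q0 W (fun e w => w ∈ e) _ hbad
  have hp1 : (n:ℝ) ^ (k - 1 - A.card) = n * (n:ℝ) ^ (k - 2 - A.card) := by
    rw [← pow_succ']; congr 1; omega
  have hgood : d / 2 * (n:ℝ) ^ (k - 1 - A.card) ≤ (Q1.card : ℝ) := by
    refine le_trans ?_ hav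
    have hQ := hdeg e0 he0 A hAe0
    have h1 : (W.card : ℝ) ≤ (vertexSet H).card := by exact_mod_cast hWs
    have h3 : (W.card : ℝ) * (n:ℝ) ^ (k - 2 - A.card) ≤ d / 2 * (n:ℝ) ^ (k - 1 - A.card) := by
      rw [hp1, ← mul_assoc]
      gcongr
      linarith
    linarith
  have hXc : (C \ V0).card = k - 1 - A.card := by
    have := Finset.card_sdiff_add_card_inter C V0
    omega
  have hUeq : (C \ V0) ∪ ((E ∩ S) \ V0) = E \ V0 := by
    ext z; simp only [hC, Finset.mem_union, Finset.mem_sdiff, Finset.mem_inter]; tauto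
  have hdis : Disjoint (C \ V0) ((E ∩ S) \ V0) := by
    rw [Finset.disjoint_left]; intro z
    simp only [hC, Finset.mem_sdiff, Finset.mem_inter]; tauto
  have hgoal : d / 2 * (n:ℝ) ^ (E \ V0).card ≤ n * (Q1.card : ℝ) := by
    have hle : (E \ V0).card ≤ (k - 1 - A.card) + 1 := by
      rw [← hUeq, Finset.card_union_of_disjoint hdis, hXc]
      have : ((E ∩ S) \ V0).card ≤ 1 := by
        rw [← hS E hE]; exact Finset.card_le_card Finset.sdiff_subset
      omega
    calc d / 2 * (n:ℝ) ^ (E \ V0).card ≤ d / 2 * (n:ℝ) ^ ((k - 1 - A.card) + 1) := by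
          have : (1:ℝ) ≤ n := by exact_mod_cast hn
          gcongr
      _ = n * (d / 2 * (n:ℝ) ^ (k - 1 - A.card)) := by ring
      _ ≤ n * (Q1.card : ℝ) := by gcongr
  refine hgoal.trans (mul_le_mul_of_nonneg_left (Nat.cast_le.2 ?_) (Nat.cast_nonneg n))
  refine ext_items n (C \ V0) ((E ∩ S) \ V0) (E \ V0) hUeq hdis Q1
    (fun e => e \ A) (fun _ y => ι y) ?_ ?_ ?_ ?_ _ ?_
  · intro e he
    simp only [hQ1, hQ0, Finset.mem_filter] at he
    rw [Finset.card_sdiff_of_subset he.1.2, (hT e he.1.1).2.1, hXc]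
  · intro e he
    simp only [hQ1, hQ0, Finset.mem_filter] at he
    exact Finset.sdiff_subset.trans (hT e he.1.1).1
  · intro e he y hy
    apply hιn
    simp only [Finset.mem_sdiff, Finset.mem_inter] at hy
    exact hy.1.2
  · intro e he e' he' h _
    simp only [hQ1, hQ0, Finset.mem_filter] at he he'
    rw [← Finset.sdiff_union_of_subset he.1.2, h, Finset.sdiff_union_of_subset he'.1.2]
  · intro e he f hf hfι
    simp only [hQ1, hQ0, Finset.mem_filter] at he
    have hTe := hT e he.1.1
    have him : C.image (fun v => if v ∈ V0 then ψ v else f v) = e := by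
      rw [merge_image, hf, ← hAdef, Finset.union_sdiff_of_subset he.1.2]
    have hmS : ∀ y ∈ E, y ∈ S → (if y ∈ V0 then ψ y else f y) = ι y := by
      intro y hy hyS
      by_cases h : y ∈ V0
      · simp only [h, if_true]; exact (hR y h).1 hyS
      · simp only [h, if_false]
        apply hfι
        simp only [Finset.mem_sdiff, Finset.mem_inter]; exact ⟨⟨hy, hyS⟩, h⟩
    have hmC : ∀ v ∈ C, (if v ∈ V0 then ψ v else f v) ∈ e := by
      intro v hv
      rw [← him]
      exact Finset.mem_image.2 ⟨v, hv, rfl⟩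
    have hinjC : Set.InjOn (fun v => if v ∈ V0 then ψ v else f v) (C : Set α) := by
      rw [← Finset.card_image_iff, him, hCk, hTe.2.1]
    refine ⟨⟨?_, ?_, hmS⟩, ?_⟩
    · intro v hv w hw hvw
      simp only at hvw
      by_cases hvS : v ∈ S <;> by_cases hwS : w ∈ S
      · rw [hmS v hv hvS, hmS w hw hwS] at hvw
        exact hι hvS hwS hvw
      · have h1 := hmC w (Finset.mem_sdiff.2 ⟨hw, hwS⟩)
        rw [← hvw, hmS v hv hvS] at h1
        exact absurd h1 (hTe.2.2 v hvS).1
      · have h1 := hmC v (Finset.mem_sdiff.2 ⟨hv, hvS⟩)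
        rw [hvw, hmS w hw hwS] at h1
        exact absurd h1 (hTe.2.2 w hwS).1
      · exact hinjC (Finset.mem_sdiff.2 ⟨hv, hvS⟩) (Finset.mem_sdiff.2 ⟨hw, hwS⟩) hvw
    · rw [him]; exact he.1.1
    · intro v hv w hw h
      rw [Finset.mem_sdiff] at hv
      by_cases hvS : v ∈ S
      · have h1 := hmS v hv.1 hvS
        simp only [hv.2, if_false] at h1
        by_cases hwS : w ∈ S
        · have h3 := (hR w hw).1 hwS
          rw [h1, h3] at h
          have := hι hvS hwS h
          rw [this] at hv
          exact hv.2 hw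
        · exact (hR w hw).2 hwS v hvS (by rw [← h, h1])
      · have h1 : f v ∈ e \ A := by
          rw [← hf]; exact Finset.mem_image_of_mem _ (by simp only [hC, Finset.mem_sdiff]; tauto)
        rw [Finset.mem_sdiff] at h1
        refine he.2 (f v) ?_ h1.1
        rw [hW, Finset.mem_sdiff]
        exact ⟨by rw [h]; exact Finset.mem_image_of_mem _ hw, h1.2⟩

theorem caseII {α : Type} [DecidableEq α] (k n : ℕ) (hk : 4 ≤ k) (hn : 0 < n)
    (H : Finset (Finset α)) (hH : IsKTree k H) (h2 : TwoContractible H)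
    (F T : Finset (Finset ℕ)) (u x : Finset ℕ → ℕ)
    (hT : ∀ D ∈ T, D ⊆ vtx n ∧ D.card = k - 1 ∧ u D ∈ D ∧ x D ∉ D ∧ x D ∈ vtx n ∧
      insert (x D) D ∈ F)
    (hne : T.Nonempty)
    (d η : ℝ) (hd : 0 ≤ d) (hη : 0 ≤ η)
    (hdeg : ∀ e ∈ T, ∀ A ⊆ e.erase (u e),
      d * (n:ℝ) ^ (k - 1 - A.card) ≤ ((T.filter fun D => A ⊆ D.erase (u D)).card : ℝ))
    (hline : ∀ B y, ((T.filter fun D => D.erase (u D) = B ∧ x D = y).card : ℝ) ≤ η * n)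
    (hηd : 4 * ((vertexSet H).card : ℝ) * η ≤ d)
    (hns : 4 * ((vertexSet H).card : ℝ) ≤ d * n) :
    (d / 2) ^ H.card * (n:ℝ) ^ ((vertexSet H).card - H.card) ≤
      ((vertexSet H).card : ℝ) ^ (vertexSet H).card * ((copies H F).card : ℝ) := by
  have hpriv : ∀ E : Finset α, ∃ p : α × α, E ∈ H → p.1 ∈ E ∧ p.2 ∈ E ∧ p.1 ≠ p.2 ∧
      ∀ F ∈ H, F ≠ E → p.1 ∉ F ∧ p.2 ∉ F := by
    intro E
    by_cases hE : E ∈ H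
    · obtain ⟨a, ha, b, hb, hab, h⟩ := two_private h2 hE
      exact ⟨(a, b), fun _ => ⟨ha, hb, hab, h⟩⟩
    · have : Nonempty α := by
        obtain ⟨E0, hE0⟩ : H.Nonempty := by
          cases hH.1 <;> simp
        obtain ⟨a, -⟩ := two_private h2 hE0
        exact ⟨a⟩
      exact ⟨(this.some, this.some), fun h => absurd h hE⟩
  choose pr hpr using hpriv
  set C : Finset α → Finset α := fun E => E \ {(pr E).1, (pr E).2} with hCdef
  have hEeq : ∀ E ∈ H, insert (pr E).1 (insert (pr E).2 (C E)) = E := by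
    intro E hE
    obtain ⟨h1, h3, -⟩ := hpr E hE
    ext z
    simp only [hCdef, Finset.mem_insert, Finset.mem_sdiff, Finset.mem_singleton]
    constructor
    · rintro (h | h | h)
      · rw [h]; exact h1
      · rw [h]; exact h3
      · exact h.1
    · tauto
  have hCk : ∀ E ∈ H, (C E).card = k - 2 := by
    intro E hE
    obtain ⟨h1, h3, h4, -⟩ := hpr E hE
    rw [hCdef]
    simp only
    rw [Finset.card_sdiff_of_subset, Finset.card_pair h4, hH.2 E hE]
    intro z hz
    simp only [Finset.mem_insert, Finset.mem_singleton] at hz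
    rcases hz with h | h <;> rw [h] <;> assumption
  have hfull : ∀ E ∈ H, ∀ f : α → ℕ, ∀ D ∈ T, (C E).image f = D.erase (u D) →
      f (pr E).1 = u D → f (pr E).2 = x D → E.image f = insert (x D) D := by
    intro E hE f D hD h1 h3 h4
    conv_lhs => rw [← hEeq E hE]
    rw [Finset.image_insert, Finset.image_insert, h1, h3, h4, Finset.insert_comm,
      Finset.insert_erase (hT D hD).2.2.1]
  refine copies_lower n hn (d/2) (by positivity) H hH.1 F (edges_le_vertices h2)
    (fun E f => Set.InjOn f (E : Set α) ∧ ∃ D ∈ T, (C E).image f = D.erase (u D) ∧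
      f (pr E).1 = u D ∧ f (pr E).2 = x D ∧ E ∈ H)
    (fun v m => True) ?_ ?_ ?_ ?_ ?_
  · intro E f g hfg ⟨h1, D, hD, h3, h4, h5, h6⟩
    refine ⟨fun v hv w hw h => h1 hv hw (by rw [hfg v hv, hfg w hw, h]), D, hD, ?_, ?_, ?_, h6⟩
    · rw [← Finset.image_congr (fun v hv => hfg v (Finset.sdiff_subset hv))]; exact h3
    · rw [← hfg _ (hpr E h6).1]; exact h4
    · rw [← hfg _ (hpr E h6).2.1]; exact h5
  · intro E _ f h; exact h.1
  · intro E hE f ⟨h1, D, hD, h3, h4, h5, _⟩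
    rw [hfull E hE f D hD h3 h4 h5]
    exact (hT D hD).2.2.2.2.2
  · intros; trivial
  intro E hE V0 hV0 ψ _ hpar
  have hEk : E.card = k := hH.2 E hE
  obtain ⟨hp1E, hp2E, hp12, hppriv⟩ := hpr E hE
  have hnot : (pr E).1 ∉ V0 ∧ (pr E).2 ∉ V0 := by
    rcases hpar with rfl | ⟨F', hF', hne', -, hint⟩
    · simp
    · obtain ⟨h3, h4⟩ := hppriv F' hF' hne'
      constructor
      · intro h
        have : (pr E).1 ∈ E ∩ V0 := Finset.mem_inter.2 ⟨hp1E, h⟩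
        rw [hint] at this
        exact h3 (Finset.mem_inter.1 this).2
      · intro h
        have : (pr E).2 ∈ E ∩ V0 := Finset.mem_inter.2 ⟨hp2E, h⟩
        rw [hint] at this
        exact h4 (Finset.mem_inter.1 this).2
  have hA : ((C E ∩ V0).image ψ).card = (C E ∩ V0).card ∧ (C E ∩ V0).card + 2 ≤ k ∧
      ∃ e ∈ T, (C E ∩ V0).image ψ ⊆ e.erase (u e) := by
    rcases hpar with rfl | ⟨F', hF', hne', ⟨hinj, D, hD, himg, -⟩, hint⟩
    · obtain ⟨e, he⟩ := hne
      refine ⟨by simp, by simp; omega, e, he, by simp⟩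
    · have hsub : C E ∩ V0 ⊆ E ∩ F' := by
        rw [← hint]; exact Finset.inter_subset_inter Finset.sdiff_subset (Finset.Subset.refl _)
      refine ⟨?_, ?_, D, hD, ?_⟩
      · apply Finset.card_image_of_injOn
        apply hinj.mono
        intro v hv
        exact (Finset.mem_inter.1 (hsub hv)).2
      · have := inter_card_le h2 hE hF' hne'
        have := Finset.card_le_card hsub; omega
      · rw [← himg]
        apply Finset.image_subset_image
        intro v hv
        have hv' := Finset.mem_inter.1 (hsub hv)
        obtain ⟨-, -, -, hq⟩ := hpr F' hF'
        have hq := hq E hE (fun h => hne' h.symm)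
        simp only [hCdef, Finset.mem_sdiff, Finset.mem_insert, Finset.mem_singleton, not_or]
        refine ⟨hv'.2, ?_, ?_⟩
        · intro h; exact hq.1 (h ▸ hv'.1)
        · intro h; exact hq.2 (h ▸ hv'.1)
  obtain ⟨hAc, hAk, e0, he0, hAe0⟩ := hA
  set A := (C E ∩ V0).image ψ with hAdef
  set W := V0.image ψ \ A with hW
  have hWs : W.card ≤ (vertexSet H).card :=
    (Finset.card_le_card Finset.sdiff_subset).trans (Finset.card_image_le.trans (Finset.card_le_card hV0))
  set Q0 := T.filter fun D => A ⊆ D.erase (u D) with hQ0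
  have hbad : ∀ w ∈ W, ((Q0.filter fun e => w ∈ e ∨ x e = w).card : ℝ) ≤
      (n:ℝ) ^ (k - 2 - A.card) * (1 + η * n) := by
    intro w hw
    have hwA : w ∉ A := (Finset.mem_sdiff.1 hw).2
    have b1 : ((Q0.filter fun e => w ∈ e).card : ℝ) ≤ (n:ℝ) ^ (k - 2 - A.card) := by
      have := cnt_super n (k-1) (insert w A) (Q0.filter fun e => w ∈ e) (by
        intro D hD
        simp only [hQ0, Finset.mem_filter] at hD
        refine ⟨(hT D hD.1.1).1, (hT D hD.1.1).2.1, ?_⟩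
        exact Finset.insert_subset hD.2 (hD.1.2.trans (Finset.erase_subset _ _)))
      rw [Finset.card_insert_of_notMem hwA] at this
      have e : k - 1 - (A.card + 1) = k - 2 - A.card := by omega
      rw [e] at this
      exact_mod_cast this
    have b2 : ((Q0.filter fun e => x e = w).card : ℝ) ≤ (n:ℝ) ^ (k - 2 - A.card) * (η * n) := by
      set I := (Q0.filter fun e => x e = w).image (fun D => D.erase (u D)) with hI
      have hIc : I.card ≤ n ^ (k - 2 - A.card) := by
        apply cnt_super n (k-2) A I
        intro B hB
        rw [hI, Finset.mem_image] at hB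
        obtain ⟨D, hD, rfl⟩ := hB
        simp only [hQ0, Finset.mem_filter] at hD
        obtain ⟨t1, t2, t3, -⟩ := hT D hD.1.1
        refine ⟨(Finset.erase_subset _ _).trans t1, ?_, hD.1.2⟩
        rw [Finset.card_erase_of_mem t3, t2]; omega
      rw [Finset.card_eq_sum_card_image (fun D => D.erase (u D)) (Q0.filter fun e => x e = w)]
      push_cast
      calc _ ≤ ∑ B ∈ I, η * n := by
            apply Finset.sum_le_sum
            intro B hB
            refine le_trans ?_ (hline B w)
            norm_cast
            apply Finset.card_le_card
            intro D hD
            simp only [hQ0, Finset.mem_filter] at hD ⊢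
            exact ⟨hD.1.1.1, hD.2, hD.1.2⟩
        _ = I.card * (η * n) := by simp
        _ ≤ (n:ℝ) ^ (k - 2 - A.card) * (η * n) := by
            gcongr
            exact_mod_cast hIc
    rw [Finset.filter_or]
    have b3 : (((Q0.filter fun e => w ∈ e) ∪ (Q0.filter fun e => x e = w)).card : ℝ) ≤
      ((Q0.filter fun e => w ∈ e).card : ℝ) + ((Q0.filter fun e => x e = w).card : ℝ) := by
      exact_mod_cast Finset.card_union_le _ _
    refine b3.trans ?_
    linarith
  set Q1 := Q0.filter fun e => ∀ w ∈ W, ¬ (w ∈ e ∨ x e = w) with hQ1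
  have hav : (Q0.card : ℝ) - W.card * ((n:ℝ) ^ (k - 2 - A.card) * (1 + η * n)) ≤ (Q1.card : ℝ) := by
    rw [hQ1]
    exact avoid Q0 W (fun e w => w ∈ e ∨ x e = w) _ hbad
  have hp1 : (n:ℝ) ^ (k - 1 - A.card) = n * (n:ℝ) ^ (k - 2 - A.card) := by
    rw [← pow_succ']; congr 1; omega
  have hgood : d / 2 * (n:ℝ) ^ (k - 1 - A.card) ≤ (Q1.card : ℝ) := by
    refine le_trans ?_ hav
    have hQ := hdeg e0 he0 A hAe0
    have h1 : (W.card : ℝ) ≤ (vertexSet H).card := by exact_mod_cast hWs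
    have h3 : (W.card : ℝ) * ((n:ℝ) ^ (k - 2 - A.card) * (1 + η * n)) ≤ d / 2 * (n:ℝ) ^ (k - 1 - A.card) := by
      have h5 : ((vertexSet H).card : ℝ) * (1 + η * n) ≤ d / 2 * n := by
        have h6 := mul_le_mul_of_nonneg_right hηd (Nat.cast_nonneg n : (0:ℝ) ≤ n)
        linarith
      calc (W.card : ℝ) * ((n:ℝ) ^ (k - 2 - A.card) * (1 + η * n))
          ≤ (vertexSet H).card * ((n:ℝ) ^ (k - 2 - A.card) * (1 + η * n)) := by gcongr
        _ = ((vertexSet H).card * (1 + η * n)) * (n:ℝ) ^ (k - 2 - A.card) := by ring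
        _ ≤ (d / 2 * n) * (n:ℝ) ^ (k - 2 - A.card) := by gcongr
        _ = _ := by rw [hp1]; ring
    linarith
  have hXc : (C E \ V0).card = k - 2 - A.card := by
    have := Finset.card_sdiff_add_card_inter (C E) V0
    have := hCk E hE
    omega
  have hUeq : (C E \ V0) ∪ {(pr E).1, (pr E).2} = E \ V0 := by
    conv_rhs => rw [← hEeq E hE]
    ext z; simp only [Finset.mem_union, Finset.mem_sdiff, Finset.mem_insert, Finset.mem_singleton]
    constructor
    · rintro (h | h | h)
      · tauto
      · rw [h]; exact ⟨Or.inl rfl, hnot.1⟩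
      · rw [h]; exact ⟨Or.inr (Or.inl rfl), hnot.2⟩
    · tauto
  have hdis : Disjoint (C E \ V0) {(pr E).1, (pr E).2} := by
    rw [Finset.disjoint_left]; intro z
    simp only [hCdef, Finset.mem_sdiff]; tauto
  have hgoal : d / 2 * (n:ℝ) ^ (E \ V0).card ≤ n * (Q1.card : ℝ) := by
    have hle : (E \ V0).card = (k - 1 - A.card) + 1 := by
      rw [← hUeq, Finset.card_union_of_disjoint hdis, hXc, Finset.card_pair hp12]
      omega
    calc d / 2 * (n:ℝ) ^ (E \ V0).card = n * (d / 2 * (n:ℝ) ^ (k - 1 - A.card)) := by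
          rw [hle]; ring
      _ ≤ n * (Q1.card : ℝ) := by gcongr
  refine hgoal.trans (mul_le_mul_of_nonneg_left (Nat.cast_le.2 ?_) (Nat.cast_nonneg n))
  refine ext_items n (C E \ V0) {(pr E).1, (pr E).2} (E \ V0) hUeq hdis Q1
    (fun D => D.erase (u D) \ A) (fun D y => if y = (pr E).1 then u D else x D) ?_ ?_ ?_ ?_ _ ?_
  · intro D hD
    simp only [hQ1, hQ0, Finset.mem_filter] at hD
    obtain ⟨t1, t2, t3, -⟩ := hT D hD.1.1
    rw [Finset.card_sdiff_of_subset hD.1.2, Finset.card_erase_of_mem t3, t2, hXc]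
    omega
  · intro D hD
    simp only [hQ1, hQ0, Finset.mem_filter] at hD
    exact Finset.sdiff_subset.trans ((Finset.erase_subset _ _).trans (hT D hD.1.1).1)
  · intro D hD y hy
    simp only [hQ1, hQ0, Finset.mem_filter] at hD
    obtain ⟨t1, t2, t3, t4, t5, -⟩ := hT D hD.1.1
    by_cases h : y = (pr E).1
    · rw [if_pos h]; exact t1 t3
    · rw [if_neg h]; exact t5
  · intro D hD D' hD' h h'
    simp only [hQ1, hQ0, Finset.mem_filter] at hD hD'
    have e1 : D.erase (u D) = D'.erase (u D') := by
      rw [← Finset.sdiff_union_of_subset hD.1.2, h, Finset.sdiff_union_of_subset hD'.1.2]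
    have e2 : u D = u D' := by
      have := h' (pr E).1 (by simp)
      simpa using this
    rw [← Finset.insert_erase (hT D hD.1.1).2.2.1, e1, e2, Finset.insert_erase (hT D' hD'.1.1).2.2.1]
  · intro D hD f hf hfg
    simp only [hQ1, hQ0, Finset.mem_filter] at hD
    obtain ⟨t1, t2, t3, t4, t5, t6⟩ := hT D hD.1.1
    have hfu : f (pr E).1 = u D := by
      have := hfg (pr E).1 (by simp)
      simpa using this
    have hfx : f (pr E).2 = x D := by
      have := hfg (pr E).2 (by simp)
      rw [if_neg hp12.symm] at this
      exact this
    have him : (C E).image (fun v => if v ∈ V0 then ψ v else f v) = D.erase (u D) := by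
      rw [merge_image, hf, ← hAdef, Finset.union_sdiff_of_subset hD.1.2]
    have hmu : (fun v => if v ∈ V0 then ψ v else f v) (pr E).1 = u D := by
      simp only [hnot.1, if_false]; exact hfu
    have hmx : (fun v => if v ∈ V0 then ψ v else f v) (pr E).2 = x D := by
      simp only [hnot.2, if_false]; exact hfx
    have himE := hfull E hE _ D hD.1.1 him hmu hmx
    refine ⟨⟨?_, D, hD.1.1, him, hmu, hmx, hE⟩, ?_⟩
    · rw [← Finset.card_image_iff, himE, hEk, Finset.card_insert_of_notMem t4, t2]; omega
    · intro v hv w hw h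
      have hψw : ψ w ∈ V0.image ψ := Finset.mem_image_of_mem _ hw
      rw [← hUeq, Finset.mem_union, Finset.mem_insert, Finset.mem_singleton] at hv
      have hcases : (f v ∈ D ∧ f v ∉ A) ∨ f v = x D ∧ f v ∉ A := by
        rcases hv with hv | hv | hv
        · left
          have h1 : f v ∈ D.erase (u D) \ A := by
            rw [← hf]; exact Finset.mem_image_of_mem _ hv
          rw [Finset.mem_sdiff] at h1
          exact ⟨Finset.erase_subset _ _ h1.1, h1.2⟩
        · left
          rw [hv, hfu]
          exact ⟨t3, fun h => (Finset.mem_erase.1 (hD.1.2 h)).1 rfl⟩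
        · right
          rw [hv, hfx]
          exact ⟨rfl, fun h => t4 (Finset.erase_subset _ _ (hD.1.2 h))⟩
      rw [← h] at hψw
      rcases hcases with ⟨c1, c2⟩ | ⟨c1, c2⟩
      · exact hD.2 (f v) (by rw [hW, Finset.mem_sdiff]; exact ⟨hψw, c2⟩) (Or.inl c1)
      · exact hD.2 (f v) (by rw [hW, Finset.mem_sdiff]; exact ⟨hψw, c2⟩) (Or.inr c1.symm)


lemma countLab {ι : Type} (k n m : ℕ) (hm : m ≤ k) (Q : Finset ι) (c : ι → Finset ℕ)
    (hc : ∀ q ∈ Q, c q ⊆ vtx n ∧ (c q).card < m) (d : ℝ) (hd : 0 ≤ d)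
    (hf : ∀ A : Finset ℕ, A.card < m →
      ((Q.filter fun q => c q = A).card : ℝ) ≤ d * (n : ℝ) ^ (k - 1 - A.card)) :
    (Q.card : ℝ) ≤ m * (d * (n : ℝ) ^ (k - 1)) := by
  have h1 : Q.card = ∑ j ∈ Finset.range m, (Q.filter fun q => (c q).card = j).card :=
    Finset.card_eq_sum_card_fiberwise (fun q hq => by
      simpa using (hc q hq).2)
  have h2 : ∀ j ∈ Finset.range m, ((Q.filter fun q => (c q).card = j).card : ℝ)
      ≤ d * (n : ℝ) ^ (k - 1) := by
    intro j hj
    rw [Finset.mem_range] at hj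
    have h3 : (Q.filter fun q => (c q).card = j).card
        = ∑ A ∈ (vtx n).powersetCard j,
          ((Q.filter fun q => (c q).card = j).filter fun q => c q = A).card :=
      Finset.card_eq_sum_card_fiberwise (fun q hq => by
        have hq' := Finset.mem_filter.1 (Finset.mem_coe.1 hq)
        exact Finset.mem_coe.2 (Finset.mem_powersetCard.2 ⟨(hc q hq'.1).1, hq'.2⟩))
    rw [h3]
    push_cast
    have h4 : ∀ A ∈ (vtx n).powersetCard j,
        (((Q.filter fun q => (c q).card = j).filter fun q => c q = A).card : ℝ)
          ≤ d * (n : ℝ) ^ (k - 1 - j) := by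
      intro A hA
      have hA' := (Finset.mem_powersetCard.1 hA).2
      refine le_trans ?_ ((hf A (by omega)).trans (by rw [hA']))
      norm_cast
      apply Finset.card_le_card
      intro q hq
      simp only [Finset.mem_filter] at hq ⊢
      exact ⟨hq.1.1, hq.2⟩
    refine (Finset.sum_le_card_nsmul _ _ _ h4).trans ?_
    rw [Finset.card_powersetCard, card_vtx, nsmul_eq_mul]
    have h5 : ((n.choose j : ℕ) : ℝ) ≤ (n : ℝ) ^ j := by
      exact_mod_cast Nat.choose_le_pow n j
    calc ((n.choose j : ℕ) : ℝ) * (d * (n : ℝ) ^ (k - 1 - j))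
        ≤ (n : ℝ) ^ j * (d * (n : ℝ) ^ (k - 1 - j)) :=
          mul_le_mul_of_nonneg_right h5 (by positivity)
      _ = d * ((n : ℝ) ^ j * (n : ℝ) ^ (k - 1 - j)) := by ring
      _ = d * (n : ℝ) ^ (k - 1) := by
          rw [← pow_add]; congr 2; omega
  rw [h1]
  push_cast
  refine (Finset.sum_le_card_nsmul _ _ _ h2).trans ?_
  rw [Finset.card_range, nsmul_eq_mul]

lemma peelSub (k n : ℕ) (Q : Finset (Finset ℕ)) (B : Finset ℕ → Finset ℕ)
    (hB : ∀ D ∈ Q, B D ⊆ vtx n ∧ (B D).card < k) (d : ℝ) (hd : 0 ≤ d)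
    (hbig : (k : ℝ) * (d * (n : ℝ) ^ (k - 1)) < Q.card) :
    ∃ Q' ⊆ Q, Q'.Nonempty ∧ ∀ e ∈ Q', ∀ A ⊆ B e,
      d * (n : ℝ) ^ (k - 1 - A.card) ≤ ((Q'.filter fun D => A ⊆ B D).card : ℝ) := by
  obtain ⟨Q', hQ', c, h1, h2, h3⟩ := peel (fun D : Finset ℕ => {A : Finset ℕ | A ⊆ B D})
    (fun A => d * (n : ℝ) ^ (k - 1 - A.card)) (fun A => by positivity) _ Q rfl
  refine ⟨Q', hQ', ?_, ?_⟩
  · by_contra hne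
    rw [Finset.not_nonempty_iff_eq_empty] at hne
    subst hne
    have := countLab k n k le_rfl Q c (fun q hq => by
      have h4 := h2 q hq (by simp)
      have h5 := hB q hq
      exact ⟨h4.trans h5.1, (Finset.card_le_card h4).trans_lt h5.2⟩) d hd (fun A hA => by
      refine le_trans ?_ (h3 A)
      norm_cast
      apply Finset.card_le_card
      intro q hq
      simp only [Finset.mem_filter] at hq ⊢
      exact ⟨hq.1, by simp, hq.2⟩)
    linarith
  · intro e he A hA
    refine (h1 e he A hA).trans ?_
    norm_cast
    apply Finset.card_le_card
    intro q hq
    simp only [Finset.mem_filter] at hq ⊢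
    exact ⟨hq.1, hq.2⟩

/-- chain lemma -/
lemma chain (r : ℕ) (G : Finset (Finset ℕ)) (hG : ∀ D ∈ G, D.card = r) (m : ℝ) (hm : 0 ≤ m)
    (hdeg : ∀ D ∈ G, ∀ u ∈ D, m ≤ ((G.filter fun D' => D.erase u ⊆ D').card : ℝ)) :
    ∀ i : ℕ, ∀ A D : Finset ℕ, D ∈ G → A ⊆ D → A.card + i = r →
      m ^ i ≤ (r : ℝ) ^ i * ((G.filter fun D' => A ⊆ D').card : ℝ) := by
  intro i
  induction i with
  | zero =>
    intro A D hD hA hc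
    simp only [pow_zero, one_mul]
    norm_cast
    exact Finset.card_pos.2 ⟨D, Finset.mem_filter.2 ⟨hD, hA⟩⟩
  | succ i ih =>
    intro A D hD hA hc
    have hDr := hG D hD
    -- pick a vertex v of D outside A
    have hlt : A.card < D.card := by omega
    obtain ⟨v, hvD, hvA⟩ := Finset.exists_mem_notMem_of_card_lt_card hlt
    -- the edges through D minus v, and for each its vertex outside D minus v
    set N := G.filter fun D' => D.erase v ⊆ D' with hN
    have hAe : A ⊆ D.erase v := fun a ha =>
      Finset.mem_erase.2 ⟨fun h => hvA (h ▸ ha), hA ha⟩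
    have hnew : ∀ D' ∈ N, ∃ w, w ∈ D' ∧ w ∉ D.erase v ∧ D' = insert w (D.erase v) := by
      intro D' hD'
      obtain ⟨hD'G, hsub⟩ := Finset.mem_filter.1 hD'
      have hc1 : (D.erase v).card + 1 = r := by rw [Finset.card_erase_of_mem hvD]; omega
      have hlt' : (D.erase v).card < D'.card := by rw [hG D' hD'G]; omega
      obtain ⟨w, hw, hw'⟩ := Finset.exists_mem_notMem_of_card_lt_card hlt'
      refine ⟨w, hw, hw', (Finset.eq_of_subset_of_card_le (Finset.insert_subset hw hsub) ?_).symm⟩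
      rw [Finset.card_insert_of_notMem hw', hG D' hD'G]; omega
    choose! w hw1 hw2 hw3 using hnew
    have hwA : ∀ D' ∈ N, w D' ∉ A := fun D' hD' h => hw2 D' hD' (hAe h)
    -- double count pairs
    have key : ∑ D' ∈ N, ((G.filter fun E => insert (w D') A ⊆ E).card : ℝ)
        ≤ (r : ℝ) * ((G.filter fun E => A ⊆ E).card : ℝ) := by
      have h1 : ∑ D' ∈ N, (G.filter fun E => insert (w D') A ⊆ E).card
          = ∑ D' ∈ N, ∑ E ∈ G.filter (fun E => A ⊆ E), if w D' ∈ E then 1 else 0 := by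
        refine Finset.sum_congr rfl fun D' hD' => ?_
        rw [← Finset.card_filter]
        congr 1
        ext E
        simp only [Finset.mem_filter, Finset.insert_subset_iff]
        tauto
      have h2 : ∑ D' ∈ N, (G.filter fun E => insert (w D') A ⊆ E).card
          ≤ r * (G.filter fun E => A ⊆ E).card := by
        rw [h1, Finset.sum_comm, mul_comm]
        rw [← smul_eq_mul]
        refine Finset.sum_le_card_nsmul _ _ _ fun E hE => ?_
        rw [← Finset.card_filter]
        have hEr : E.card = r := hG E (Finset.mem_filter.1 hE).1
        rw [← hEr]
        refine Finset.card_le_card_of_injOn w (fun D' hD' => ?_) ?_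
        · exact (Finset.mem_filter.1 (Finset.mem_coe.1 hD')).2
        · intro D1 hD1 D2 hD2 h12
          have a1 := (Finset.mem_filter.1 (Finset.mem_coe.1 hD1)).1
          have a2 := (Finset.mem_filter.1 (Finset.mem_coe.1 hD2)).1
          rw [hw3 D1 a1, hw3 D2 a2, h12]
      exact_mod_cast h2
    have hlow : ∀ D' ∈ N, m ^ i ≤ (r : ℝ) ^ i *
        ((G.filter fun E => insert (w D') A ⊆ E).card : ℝ) := by
      intro D' hD'
      refine ih (insert (w D') A) D' (Finset.mem_filter.1 hD').1 ?_ ?_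
      · exact Finset.insert_subset (hw1 D' hD')
          (hAe.trans (Finset.mem_filter.1 hD').2)
      · rw [Finset.card_insert_of_notMem (hwA D' hD')]; omega
    have hmN : m ≤ (N.card : ℝ) := by
      refine (hdeg D hD v hvD).trans (le_of_eq ?_)
      congr 1
    calc m ^ (i + 1) = m * m ^ i := by ring
      _ ≤ N.card * m ^ i := mul_le_mul_of_nonneg_right hmN (by positivity)
      _ ≤ ∑ D' ∈ N, (r : ℝ) ^ i * ((G.filter fun E => insert (w D') A ⊆ E).card : ℝ) := by
          rw [← nsmul_eq_mul]
          exact Finset.card_nsmul_le_sum _ _ _ hlow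
      _ = (r : ℝ) ^ i * ∑ D' ∈ N, ((G.filter fun E => insert (w D') A ⊆ E).card : ℝ) := by
          rw [Finset.mul_sum]
      _ ≤ (r : ℝ) ^ i * ((r : ℝ) * ((G.filter fun E => A ⊆ E).card : ℝ)) :=
          mul_le_mul_of_nonneg_left key (by positivity)
      _ = _ := by ring

lemma mem_filter_any {ι : Type} {p : ι → Prop} {_ : DecidablePred p} {Q : Finset ι} {q : ι} :
    q ∈ Finset.filter p Q ↔ q ∈ Q ∧ p q := Finset.mem_filter

lemma branchII {α : Type} [DecidableEq α] (k n : ℕ) (hk : 4 ≤ k) (hn : 0 < n)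
    (H : Finset (Finset α)) (hH : IsKTree k H) (h2 : TwoContractible H)
    (F Q : Finset (Finset ℕ)) (u x : Finset ℕ → ℕ)
    (hQ : ∀ D ∈ Q, D ⊆ vtx n ∧ D.card = k - 1 ∧ u D ∈ D ∧ x D ∉ D ∧ x D ∈ vtx n ∧
      insert (x D) D ∈ F) (d η : ℝ) (hd : 0 ≤ d) (hη : 0 ≤ η)
    (hline : ∀ (B : Finset ℕ) (y : ℕ),
      ((Q.filter fun D => D.erase (u D) = B ∧ x D = y).card : ℝ) ≤ η * n)
    (hηd : 4 * ((vertexSet H).card : ℝ) * η ≤ d)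
    (hns : 4 * ((vertexSet H).card : ℝ) ≤ d * n)
    (hbig : (k : ℝ) * (d * (n : ℝ) ^ (k - 1)) < Q.card) :
    (d / 2) ^ H.card * (n : ℝ) ^ ((vertexSet H).card - H.card)
      ≤ ((vertexSet H).card : ℝ) ^ (vertexSet H).card * ((copies H F).card : ℝ) := by
  obtain ⟨Q', hQ', hne, hdeg⟩ := peelSub k n Q (fun D => D.erase (u D)) (fun D hD => by
    refine ⟨(Finset.erase_subset _ _).trans (hQ D hD).1, ?_⟩
    refine (Finset.card_le_card (Finset.erase_subset _ _)).trans_lt ?_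
    rw [(hQ D hD).2.1]; omega) d hd hbig
  refine caseII k n hk hn H hH h2 F Q' u x (fun D hD => hQ D (hQ' hD)) hne d η hd hη hdeg
    (fun B y => ?_) hηd hns
  refine le_trans ?_ (hline B y)
  norm_cast
  exact Finset.card_le_card (Finset.filter_subset_filter _ hQ')

lemma branchIII {α : Type} [DecidableEq α] (k n : ℕ) (hk : 4 ≤ k) (hn : 0 < n)
    (H : Finset (Finset α)) (hH : IsKTree k H) (h2 : TwoContractible H)
    (F Q : Finset (Finset ℕ)) (S : Finset α) (hS : IsCrosscut H S) (S' : Finset ℕ)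
    (hcard : S'.card = S.card) (hS' : S' ⊆ vtx n)
    (hQ : ∀ D ∈ Q, D ⊆ vtx n ∧ D.card = k - 1 ∧ ∀ y ∈ S', y ∉ D ∧ insert y D ∈ F)
    (d : ℝ) (hd : 0 ≤ d)
    (hns : 2 * ((vertexSet H).card : ℝ) ≤ d * n)
    (hbig : (k : ℝ) * (d * (n : ℝ) ^ (k - 1)) < Q.card) :
    (d / 2) ^ H.card * (n : ℝ) ^ ((vertexSet H).card - H.card)
      ≤ ((vertexSet H).card : ℝ) ^ (vertexSet H).card * ((copies H F).card : ℝ) := by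
  obtain ⟨Q', hQ', hne, hdeg⟩ := peelSub k n Q (fun D => D) (fun D hD => by
    refine ⟨(hQ D hD).1, ?_⟩
    rw [(hQ D hD).2.1]; omega) d hd hbig
  obtain ⟨e⟩ : Nonempty (S ≃ S') := ⟨Finset.equivOfCardEq hcard.symm⟩
  set ι : α → ℕ := fun y => if h : y ∈ S then (e ⟨y, h⟩ : ℕ) else 0 with hι
  have hιS : ∀ y ∈ S, ι y ∈ S' := by
    intro y hy
    simp only [hι, hy, dite_true]
    exact (e ⟨y, hy⟩).2
  refine caseIII k n hk hn H hH h2 F Q' S hS ι ?_ (fun y hy => hS' (hιS y hy))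
    (fun D hD => ⟨(hQ D (hQ' hD)).1, (hQ D (hQ' hD)).2.1,
      fun y hy => (hQ D (hQ' hD)).2.2 _ (hιS y hy)⟩) hne d hd hdeg hns
  intro y hy z hz hyz
  have hy' : y ∈ S := hy
  have hz' : z ∈ S := hz
  simp only [hι, hy', hz', dite_true] at hyz
  have := e.injective (Subtype.ext hyz)
  exact congrArg Subtype.val this

lemma step2 {α : Type} [DecidableEq α] (k σ : ℕ) (hk : 4 ≤ k) (hσ : 1 ≤ σ)
    (H : Finset (Finset α)) (hH : IsKTree k H) (h2 : TwoContractible H)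
    (S : Finset α) (hS : IsCrosscut H S) (hSc : S.card = σ) (δ : ℝ) (hδ : 0 < δ) :
    ∃ d : ℝ, 0 < d ∧ ∃ n₁ : ℕ, ∀ n ≥ n₁, ∀ (F T : Finset (Finset ℕ))
      (A : Finset ℕ → Finset ℕ),
      (∀ D ∈ T, D ⊆ vtx n ∧ D.card = k - 1 ∧ A D ⊆ vtx n ∧ (A D).card = σ ∧
        ∀ y ∈ A D, y ∉ D ∧ insert y D ∈ F) →
      δ * (n : ℝ) ^ (k - 1) ≤ T.card →
    (d / 2) ^ H.card * (n : ℝ) ^ ((vertexSet H).card - H.card)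
      ≤ ((vertexSet H).card : ℝ) ^ (vertexSet H).card * ((copies H F).card : ℝ) := by
  set s : ℝ := ((vertexSet H).card : ℝ) with hs
  have hs0 : 0 ≤ s := by positivity
  have hkR : (0 : ℝ) < k := by exact_mod_cast (by omega : 0 < k)
  have hσR : (0 : ℝ) < σ := by exact_mod_cast (by omega : 0 < σ)
  obtain ⟨r, hr⟩ : ∃ r, r = k - 1 := ⟨_, rfl⟩
  have hrR : (0 : ℝ) < r := by exact_mod_cast (by omega : 0 < r)
  obtain ⟨d3, hd3⟩ : ∃ d3, d3 = δ / (4 * k) := ⟨_, rfl⟩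
  have hd3p : 0 < d3 := by rw [hd3]; positivity
  have hd3k : k * d3 = δ / 4 := by rw [hd3]; field_simp
  obtain ⟨η, hη⟩ : ∃ η, η = d3 / (4 * (s + 1)) := ⟨_, rfl⟩
  have hηp : 0 < η := by rw [hη]; positivity
  have hηd : 4 * s * η ≤ d3 := by
    have : 4 * (s + 1) * η = d3 := by rw [hη]; field_simp
    nlinarith
  obtain ⟨C, hC⟩ : ∃ C : ℝ, C = σ * (r / η) ^ r := ⟨_, rfl⟩
  have hCp : 0 < C := by rw [hC]; positivity
  obtain ⟨d4, hd4⟩ : ∃ d4, d4 = δ / (4 * k * C ^ σ) := ⟨_, rfl⟩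
  have hd4p : 0 < d4 := by rw [hd4]; positivity
  have hd4k : C ^ σ * (k * d4) = δ / 4 := by rw [hd4]; field_simp
  refine ⟨min d3 d4, lt_min hd3p hd4p, ⌈4 * s / d3⌉₊ + ⌈2 * s / d4⌉₊ + 1, ?_⟩
  intro n hn F T A hT hTc
  have hn0 : 0 < n := by omega
  have hnR : (0 : ℝ) < n := by exact_mod_cast hn0
  have hn3 : 4 * s ≤ d3 * n := by
    have : 4 * s / d3 ≤ n := (Nat.le_ceil _).trans (by exact_mod_cast (by omega))
    rw [div_le_iff₀ hd3p] at this
    linarith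
  have hn4 : 2 * s ≤ d4 * n := by
    have : 2 * s / d4 ≤ n := (Nat.le_ceil _).trans (by exact_mod_cast (by omega))
    rw [div_le_iff₀ hd4p] at this
    linarith
  have hnp : (0 : ℝ) < (n : ℝ) ^ (k - 1) := by positivity
  -- peel the pairs
  set P : Finset (Finset ℕ × ℕ) := T.biUnion fun D => (A D).image fun y => (D, y) with hP
  have hPm : ∀ p : Finset ℕ × ℕ, p ∈ P ↔ p.1 ∈ T ∧ p.2 ∈ A p.1 := by
    rintro ⟨D, y⟩
    simp only [hP, Finset.mem_biUnion, Finset.mem_image, Prod.mk.injEq]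
    constructor
    · rintro ⟨D', hD', y', hy', rfl, rfl⟩; exact ⟨hD', hy'⟩
    · rintro ⟨h1, h2⟩; exact ⟨D, h1, y, h2, rfl, rfl⟩
  obtain ⟨P', hP', c, hp1, hp2, hp3⟩ := peel
    (fun p : Finset ℕ × ℕ => {q : Finset ℕ × ℕ | ∃ u ∈ p.1, q = (p.1.erase u, p.2)})
    (fun _ => η * n) (fun _ => by positivity) _ P rfl
  set T3 := T.filter fun D => ∀ y ∈ A D, (D, y) ∈ P' with hT3
  set T2 := T.filter fun D => ¬ ∀ y ∈ A D, (D, y) ∈ P' with hT2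
  have hsplit : (T3.card : ℝ) + T2.card = T.card := by
    exact_mod_cast Finset.card_filter_add_card_filter_not (s := T) _
  have hpos : (0 : ℝ) < δ * (n : ℝ) ^ (k - 1) := by positivity
  have mono : ∀ d' : ℝ, min d3 d4 ≤ d' →
      (d' / 2) ^ H.card * (n : ℝ) ^ ((vertexSet H).card - H.card)
      ≤ s ^ (vertexSet H).card * ((copies H F).card : ℝ) →
      (min d3 d4 / 2) ^ H.card * (n : ℝ) ^ ((vertexSet H).card - H.card)
      ≤ s ^ (vertexSet H).card * ((copies H F).card : ℝ) := by
    intro d' hd' h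
    refine le_trans (mul_le_mul_of_nonneg_right ?_ (by positivity)) h
    have := lt_min hd3p hd4p
    exact pow_le_pow_left₀ (by positivity) (by linarith) _
  by_cases hcase : (T.card : ℝ) / 2 ≤ T2.card
  · refine mono d3 (min_le_left _ _) ?_
    have hx : ∀ D ∈ T2, ∃ y u, y ∈ A D ∧ u ∈ D ∧ (D, y) ∉ P' ∧ c (D, y) = (D.erase u, y) := by
      intro D hD
      obtain ⟨hDT, hD'⟩ := Finset.mem_filter.1 hD
      push Not at hD'
      obtain ⟨y, hy, hyP⟩ := hD'
      obtain ⟨u, hu, hcu⟩ := hp2 (D, y) ((hPm _).2 ⟨hDT, hy⟩) hyP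
      exact ⟨y, u, hy, hu, hyP, hcu⟩
    choose! x u hx1 hx2 hx3 hx4 using hx
    refine branchII k n hk hn0 H hH h2 F T2 u x (fun D hD => ?_) d3 η hd3p.le hηp.le
      (fun B y => ?_) hηd hn3 ?_
    · have h := hT D (Finset.mem_filter.1 hD).1
      have hA := h.2.2.2.2 _ (hx1 D hD)
      exact ⟨h.1, h.2.1, hx2 D hD, hA.1, h.2.2.1 (hx1 D hD), hA.2⟩
    · refine le_trans ?_ (hp3 (B, y))
      norm_cast
      refine Finset.card_le_card_of_injOn (fun D => (D, x D)) ?_ ?_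
      · intro D hD
        obtain ⟨hD2, h5, h6⟩ := Finset.mem_filter.1 (Finset.mem_coe.1 hD)
        rw [Finset.mem_coe, mem_filter_any]
        refine ⟨?_, hx3 D hD2, ?_⟩
        · exact (hPm _).2 ⟨(Finset.mem_filter.1 hD2).1, hx1 D hD2⟩
        · rw [hx4 D hD2, h5, h6]
      · intro D1 _ D2 _ h
        exact (Prod.mk.inj h).1
    · rw [← mul_assoc, hd3k]; linarith
  · refine mono d4 (min_le_right _ _) ?_
    have hT3c : (T.card : ℝ) / 2 ≤ T3.card := by linarith
    set X := P'.image Prod.snd with hX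
    -- few vertices
    have hXc : (X.card : ℝ) ≤ C := by
      have hfib : ∀ y ∈ X, (η * n / r) ^ r ≤ ((P'.filter fun p => p.2 = y).card : ℝ) := by
        intro y hy
        obtain ⟨⟨D, y'⟩, hDP, rfl⟩ := Finset.mem_image.1 hy
        simp only
        set G := (P'.filter fun p => p.2 = y').image Prod.fst with hG
        have hGm : ∀ E, E ∈ G ↔ (E, y') ∈ P' := by
          intro E
          simp only [hG, Finset.mem_image, Finset.mem_filter]
          constructor
          · rintro ⟨⟨E', yy⟩, ⟨h5, h6⟩, h7⟩
            simp only at h6 h7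
            subst h6; subst h7; exact h5
          · intro h; exact ⟨(E, y'), ⟨h, rfl⟩, rfl⟩
        have hGT : ∀ E ∈ G, E ∈ T := fun E hE => ((hPm _).1 (hP' ((hGm E).1 hE))).1
        have hch := chain r G (fun E hE => by rw [(hT E (hGT E hE)).2.1, hr]) (η * n)
          (by positivity) (fun E hE v hv => by
            refine (hp1 (E, y') ((hGm E).1 hE) (E.erase v, y') ⟨v, hv, rfl⟩).trans ?_
            norm_cast
            refine Finset.card_le_card_of_injOn Prod.fst ?_ ?_
            · rintro ⟨E', yy⟩ hE'
              rw [Finset.mem_coe, mem_filter_any] at hE'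
              obtain ⟨h5, w, hw, h6⟩ := hE'
              obtain ⟨h7, h8⟩ := Prod.mk.inj h6
              simp only at h7 h8 hw
              refine Finset.mem_coe.2 (Finset.mem_filter.2 ⟨(hGm _).2 (h8 ▸ h5), ?_⟩)
              rw [h7]; exact Finset.erase_subset _ _
            · rintro ⟨E1, y1⟩ h1 ⟨E2, y2⟩ h2' h12
              rw [Finset.mem_coe, mem_filter_any] at h1 h2'
              obtain ⟨_, w1, _, h6⟩ := h1
              obtain ⟨_, w2, _, h6'⟩ := h2'
              have e1 := (Prod.mk.inj h6).2
              have e2 := (Prod.mk.inj h6').2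
              simp only at e1 e2 h12
              rw [h12, ← e1, ← e2]) r ∅ D ((hGm D).2 hDP) (Finset.empty_subset _) (by simp)
        rw [div_pow, div_le_iff₀ (by positivity)]
        refine hch.trans ?_
        rw [mul_comm]
        refine mul_le_mul_of_nonneg_right ?_ (by positivity)
        norm_cast
        exact (Finset.card_le_card (Finset.filter_subset _ _)).trans Finset.card_image_le
      have hsum : (P'.card : ℝ) = ∑ y ∈ X, ((P'.filter fun p => p.2 = y).card : ℝ) := by
        exact_mod_cast Finset.card_eq_sum_card_image Prod.snd P'
      have hPc : (P'.card : ℝ) ≤ σ * (n : ℝ) ^ r := by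
        have h1 : P.card ≤ T.card * σ := by
          refine Finset.card_biUnion_le_card_mul _ _ _ fun D hD => ?_
          exact Finset.card_image_le.trans (hT D hD).2.2.2.1.le
        have h3 : T.card ≤ n ^ r := by
          have := cnt_super n r ∅ T (fun D hD =>
            ⟨(hT D hD).1, by rw [(hT D hD).2.1, hr], Finset.empty_subset _⟩)
          simpa using this
        have h4 : P'.card ≤ σ * n ^ r :=
          (Finset.card_le_card hP').trans (h1.trans (by rw [mul_comm]; exact Nat.mul_le_mul_left _ h3))
        exact_mod_cast h4
      have h5 : (X.card : ℝ) * (η * n / r) ^ r ≤ σ * (n : ℝ) ^ r := by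
        refine le_trans ?_ hPc
        rw [hsum, ← nsmul_eq_mul]
        exact Finset.card_nsmul_le_sum _ _ _ hfib
      have h6 : C * (η * n / r) ^ r = σ * (n : ℝ) ^ r := by
        rw [hC, mul_assoc, ← mul_pow]
        congr 2
        field_simp
      have h7 : (0 : ℝ) < (η * n / r) ^ r := by positivity
      exact le_of_mul_le_mul_right (h5.trans h6.ge) h7
    -- pigeonhole
    have hmaps : ∀ D ∈ T3, A D ∈ X.powersetCard σ := by
      intro D hD
      obtain ⟨hDT, hDA⟩ := Finset.mem_filter.1 hD
      refine Finset.mem_powersetCard.2 ⟨fun y hy => ?_, (hT D hDT).2.2.2.1⟩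
      exact Finset.mem_image.2 ⟨(D, y), hDA y hy, rfl⟩
    have hex : ∃ S' ∈ X.powersetCard σ, (k : ℝ) * (d4 * (n : ℝ) ^ (k - 1))
        < ((T3.filter fun D => A D = S').card : ℝ) := by
      by_contra hcon
      push Not at hcon
      have h1 : (T3.card : ℝ) = ∑ S' ∈ X.powersetCard σ,
          ((T3.filter fun D => A D = S').card : ℝ) := by
        exact_mod_cast Finset.card_eq_sum_card_fiberwise (fun D hD => hmaps D hD)
      have h3 := Finset.sum_le_card_nsmul _ _ _ hcon
      rw [← h1, nsmul_eq_mul, Finset.card_powersetCard] at h3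
      have h4 : ((X.card.choose σ : ℕ) : ℝ) ≤ C ^ σ := by
        calc ((X.card.choose σ : ℕ) : ℝ) ≤ (X.card : ℝ) ^ σ := by
              exact_mod_cast Nat.choose_le_pow _ _
          _ ≤ C ^ σ := pow_le_pow_left₀ (by positivity) hXc _
      have h5 := mul_le_mul_of_nonneg_right h4
        (by positivity : (0 : ℝ) ≤ (k : ℝ) * (d4 * (n : ℝ) ^ (k - 1)))
      have h6 : C ^ σ * ((k : ℝ) * (d4 * (n : ℝ) ^ (k - 1))) = δ / 4 * (n : ℝ) ^ (k - 1) := by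
        rw [← hd4k]; ring
      linarith
    obtain ⟨S', hS'm, hS'big⟩ := hex
    have hne : (T3.filter fun D => A D = S').Nonempty := by
      rw [← Finset.card_pos]
      have : (0 : ℝ) < ((T3.filter fun D => A D = S').card : ℝ) :=
        lt_of_le_of_lt (by positivity) hS'big
      exact_mod_cast this
    have hmem : ∀ D ∈ T3.filter (fun D => A D = S'), D ∈ T ∧ A D = S' := fun D hD =>
      ⟨(Finset.mem_filter.1 (Finset.mem_filter.1 hD).1).1, (Finset.mem_filter.1 hD).2⟩
    obtain ⟨D0, hD0⟩ := hne
    refine branchIII k n hk hn0 H hH h2 F (T3.filter fun D => A D = S') S hS S'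
      (by rw [(Finset.mem_powersetCard.1 hS'm).2, hSc]) ?_ ?_ d4 hd4p.le hn4 hS'big
    · have := hmem D0 hD0
      rw [← this.2]; exact (hT D0 this.1).2.2.1
    · intro D hD
      obtain ⟨h5, h6⟩ := hmem D hD
      have h7 := hT D h5
      rw [← h6]
      exact ⟨h7.1, h7.2.1, h7.2.2.2.2⟩
/-- optimal supersaturation at the Turán threshold: a `k`-graph with
`a·C(n,k−1)` edges, `a ≥ σ−1+γ`, contains at least `β·a^t·n^{s−t}` copies of a
2-contractible `k`-tree `H` with `s` vertices, `t` edges and cross-cut number `σ`. -/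
theorem stmt_12 {α : Type} [DecidableEq α] (k s t σ : ℕ) (hk : 4 ≤ k)
    (γ : ℝ) (hγ0 : 0 < γ) (hγ1 : γ < 1)
    (H : Finset (Finset α)) (hH : IsKTree k H) (h2 : TwoContractible H)
    (hvs : (vertexSet H).card = s) (hte : H.card = t)
    (hσ : IsCrosscutNumber H σ) :
    ∃ β : ℝ, 0 < β ∧ ∃ n₀ : ℕ, ∀ n ≥ n₀, ∀ F : Finset (Finset ℕ), ∀ a : ℝ,
      IsKGraphOn k n F → (F.card : ℝ) = a * (n.choose (k - 1) : ℝ) →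
      (σ : ℝ) - 1 + γ ≤ a →
      β * a ^ t * (n : ℝ) ^ (s - t) ≤ ((copies H F).card : ℝ) := by
  obtain ⟨⟨S, hS, hSc⟩, -⟩ := hσ
  have hHne : H.Nonempty := by
    cases hH.1 <;> simp
  have hσ1 : 1 ≤ σ := by
    obtain ⟨E, hE⟩ := hHne
    have h3 := hS E hE
    have h4 := Finset.card_le_card (Finset.inter_subset_right : E ∩ S ⊆ S)
    omega
  have hs1 : 1 ≤ s := by
    have h3 := edges_le_vertices h2
    have h4 := hHne.card_pos
    omega
  have hkR : (0 : ℝ) < k := by exact_mod_cast (by omega : 0 < k)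
  have hσR : (1 : ℝ) ≤ σ := by exact_mod_cast hσ1
  have hsR : (0 : ℝ) < s := by exact_mod_cast hs1
  obtain ⟨M, hM⟩ : ∃ M : ℕ, M = 2 * s * k + 1 := ⟨_, rfl⟩
  have hMR : (0 : ℝ) < M := by exact_mod_cast (by omega : 0 < M)
  obtain ⟨K0, hK0⟩ : ∃ K0 : ℝ, K0 = 2 ^ (k - 1) * ((k - 1).factorial : ℝ) := ⟨_, rfl⟩
  have hK0p : 0 < K0 := by rw [hK0]; positivity
  obtain ⟨ε, hε⟩ : ∃ ε : ℝ, ε = γ / (2 * σ) := ⟨_, rfl⟩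
  have hεp : 0 < ε := by rw [hε]; positivity
  have hεσ : ε * σ = γ / 2 := by rw [hε]; field_simp
  have hε2 : ε ≤ 1 / 2 := by nlinarith
  obtain ⟨δ, hδ⟩ : ∃ δ : ℝ, δ = ε / (k * K0) := ⟨_, rfl⟩
  have hδp : 0 < δ := by rw [hδ]; positivity
  have hδk : k * δ * K0 = ε := by rw [hδ]; field_simp
  obtain ⟨δq, hδq⟩ : ∃ δq : ℝ, δq = γ / (2 * M * K0) := ⟨_, rfl⟩
  have hδqp : 0 < δq := by rw [hδq]; positivity
  have hδqk : M * (δq * K0) = γ / 2 := by rw [hδq]; field_simp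
  obtain ⟨d, hd, n1, hstep⟩ := step2 k σ hk hσ1 H hH h2 S hS hSc δq hδqp
  rw [hvs, hte] at hstep
  obtain ⟨b, hb⟩ : ∃ b : ℝ, b = min ((δ / 2) ^ t) ((d / 2) ^ t / (2 * M) ^ t) := ⟨_, rfl⟩
  have hbp : 0 < b := by rw [hb]; exact lt_min (by positivity) (by positivity)
  refine ⟨b / (s : ℝ) ^ s, by positivity, n1 + 2 * k, ?_⟩
  intro n hn F a hF hFc ha
  have hn0 : 0 < n := by omega
  have hap : 0 < a := by linarith
  obtain ⟨N, hN⟩ : ∃ N : ℝ, N = (n.choose (k - 1) : ℝ) := ⟨_, rfl⟩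
  have hNp : 0 < N := by
    rw [hN]; exact_mod_cast Nat.choose_pos (by omega)
  rw [← hN] at hFc
  have hnN : (n : ℝ) ^ (k - 1) ≤ K0 * N := by
    have h3 := Nat.pow_le_choose (k - 1) n (α := ℝ)
    rw [div_le_iff₀ (by positivity)] at h3
    have h4 : (n : ℝ) ≤ 2 * ((n + 1 - (k - 1) : ℕ) : ℝ) := by
      exact_mod_cast (by omega : n ≤ 2 * (n + 1 - (k - 1)))
    calc (n : ℝ) ^ (k - 1) ≤ (2 * ((n + 1 - (k - 1) : ℕ) : ℝ)) ^ (k - 1) :=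
          pow_le_pow_left₀ (by positivity) h4 _
      _ = 2 ^ (k - 1) * ((n + 1 - (k - 1) : ℕ) : ℝ) ^ (k - 1) := by rw [mul_pow]
      _ ≤ 2 ^ (k - 1) * ((n.choose (k - 1) : ℝ) * ((k - 1).factorial : ℝ)) :=
          mul_le_mul_of_nonneg_left (by exact_mod_cast h3) (by positivity)
      _ = K0 * N := by rw [hK0, hN]; ring
  -- it suffices to bound by the product with the power of s
  suffices hfin : b * a ^ t * (n : ℝ) ^ (s - t) ≤ (s : ℝ) ^ s * ((copies H F).card : ℝ) by
    have : b / (s : ℝ) ^ s * a ^ t * (n : ℝ) ^ (s - t)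
        = (b * a ^ t * (n : ℝ) ^ (s - t)) / (s : ℝ) ^ s := by ring
    rw [this, div_le_iff₀ (by positivity), mul_comm _ ((s : ℝ) ^ s)]
    exact hfin
  obtain ⟨F', hF', c, hp1, hp2, hp3⟩ := peel
    (fun E : Finset ℕ => {A : Finset ℕ | A ⊆ E ∧ A.card < k})
    (fun A => if A.card + 2 ≤ k then δ * a * (n : ℝ) ^ (k - 1 - A.card) else (M : ℝ))
    (fun A => by split_ifs <;> positivity) _ F rfl
  by_cases hne : F'.Nonempty
  · have h := caseI k n hk hn0 H hH h2 F F' hF hF' hne (δ * a) (by positivity)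
      (fun e he A hA hAc => by
        have h3 := hp1 e he A ⟨hA, by omega⟩
        rw [if_pos hAc] at h3
        refine h3.trans ?_
        norm_cast
        apply Finset.card_le_card
        intro q hq
        simp only [mem_filter_any] at hq ⊢
        exact ⟨hq.1, hq.2.1⟩)
      (fun e he A hA hAc => by
        have h3 := hp1 e he A ⟨hA, by omega⟩
        rw [if_neg (by omega)] at h3
        have h4 := Nat.cast_le.1 h3
        rw [hvs, ← hM]
        refine h4.trans ?_
        apply Finset.card_le_card
        intro q hq
        simp only [mem_filter_any] at hq ⊢
        exact ⟨hq.1, hq.2.1⟩)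
    rw [hvs, hte] at h
    refine le_trans (mul_le_mul_of_nonneg_right ?_ (by positivity)) h
    have h5 : (δ * a / 2) ^ t = (δ / 2) ^ t * a ^ t := by rw [← mul_pow]; congr 1; ring
    rw [h5, hb]
    exact mul_le_mul_of_nonneg_right (min_le_left _ _) (by positivity)
  · rw [Finset.not_nonempty_iff_eq_empty] at hne
    subst hne
    have hcE : ∀ E ∈ F, c E ⊆ E ∧ (c E).card < k := fun E hE => hp2 E hE (by simp)
    set fib : Finset ℕ → Finset ℕ := fun D => (vtx n).filter fun y => y ∉ D ∧ insert y D ∈ F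
      with hfib
    set T := ((vtx n).powersetCard (k - 1)).filter fun D => σ ≤ (fib D).card with hT
    set Q1 := F.filter fun E => (c E).card < k - 1 with hQ1
    set Q2 := F.filter fun E => ¬ (c E).card < k - 1 with hQ2
    have hsplit : (Q1.card : ℝ) + Q2.card = F.card := by
      exact_mod_cast Finset.card_filter_add_card_filter_not (s := F) _
    have hQ1c : (Q1.card : ℝ) ≤ ε * a * N := by
      have h3 := countLab k n (k - 1) (by omega) Q1 c (fun q hq => by
        obtain ⟨h5, h6⟩ := Finset.mem_filter.1 hq
        exact ⟨(hcE q h5).1.trans (hF q h5).1, h6⟩) (δ * a) (by positivity) (fun A hA => by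
          have h4 := hp3 A
          rw [if_pos (by omega)] at h4
          refine le_trans ?_ h4
          norm_cast
          apply Finset.card_le_card
          intro q hq
          simp only [mem_filter_any, hQ1] at hq ⊢
          exact ⟨hq.1.1, by simp, hq.2⟩)
      have h4 : ((k - 1 : ℕ) : ℝ) ≤ k := by exact_mod_cast (by omega)
      calc (Q1.card : ℝ) ≤ ((k - 1 : ℕ) : ℝ) * (δ * a * (n : ℝ) ^ (k - 1)) := h3
        _ ≤ k * (δ * a * (n : ℝ) ^ (k - 1)) := mul_le_mul_of_nonneg_right h4 (by positivity)
        _ ≤ k * (δ * a * (K0 * N)) := by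
            refine mul_le_mul_of_nonneg_left (mul_le_mul_of_nonneg_left hnN ?_) ?_ <;> positivity
        _ = (k * δ * K0) * a * N := by ring
        _ = ε * a * N := by rw [hδk]
    have hQ2sum : (Q2.card : ℝ) = ∑ D ∈ (vtx n).powersetCard (k - 1),
        ((Q2.filter fun E => c E = D).card : ℝ) := by
      exact_mod_cast Finset.card_eq_sum_card_fiberwise (fun E hE => by
        obtain ⟨h5, h6⟩ := Finset.mem_filter.1 (Finset.mem_coe.1 hE)
        have h7 := hcE E h5
        exact Finset.mem_coe.2 (Finset.mem_powersetCard.2 ⟨h7.1.trans (hF E h5).1, by omega⟩))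
    have hfM : ∀ D ∈ (vtx n).powersetCard (k - 1),
        ((Q2.filter fun E => c E = D).card : ℝ) ≤ M := by
      intro D hD
      have hDc := (Finset.mem_powersetCard.1 hD).2
      have h4 := hp3 D
      rw [if_neg (by omega)] at h4
      refine le_trans ?_ h4
      norm_cast
      apply Finset.card_le_card
      intro q hq
      simp only [mem_filter_any, hQ2] at hq ⊢
      exact ⟨hq.1.1, by simp, hq.2⟩
    have hff : ∀ D ∈ (vtx n).powersetCard (k - 1),
        (Q2.filter fun E => c E = D).card ≤ (fib D).card := by
      intro D hD
      have hDc := (Finset.mem_powersetCard.1 hD).2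
      have hsub : (Q2.filter fun E => c E = D) ⊆ (fib D).image fun y => insert y D := by
        intro E hE
        simp only [mem_filter_any, hQ2] at hE
        obtain ⟨⟨hEF, -⟩, hcD⟩ := hE
        have h5 := (hcE E hEF).1
        rw [hcD] at h5
        have h6 := hF E hEF
        obtain ⟨y, hy, hyD⟩ := Finset.exists_mem_notMem_of_card_lt_card
          (show D.card < E.card by omega)
        have h7 : insert y D = E := by
          refine Finset.eq_of_subset_of_card_le (Finset.insert_subset hy h5) ?_
          rw [Finset.card_insert_of_notMem hyD]; omega
        refine Finset.mem_image.2 ⟨y, ?_, h7⟩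
        simp only [hfib, mem_filter_any]
        exact ⟨h6.1 hy, hyD, by rw [h7]; exact hEF⟩
      exact (Finset.card_le_card hsub).trans Finset.card_image_le
    have hpc : (((vtx n).powersetCard (k - 1)).card : ℝ) = N := by
      rw [Finset.card_powersetCard, card_vtx, hN]
    have hQ2M : (Q2.card : ℝ) ≤ N * M := by
      rw [hQ2sum, ← hpc, ← nsmul_eq_mul]
      exact Finset.sum_le_card_nsmul _ _ _ hfM
    have hQ2T : (Q2.card : ℝ) ≤ N * ((σ : ℝ) - 1) + M * T.card := by
      have h3 : ∀ D ∈ (vtx n).powersetCard (k - 1),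
          ((Q2.filter fun E => c E = D).card : ℝ)
            ≤ ((σ : ℝ) - 1) + M * (if σ ≤ (fib D).card then 1 else 0) := by
        intro D hD
        by_cases h4 : σ ≤ (fib D).card
        · rw [if_pos h4]
          have := hfM D hD
          linarith
        · rw [if_neg h4]
          have h5 := hff D hD
          have h6 : (Q2.filter fun E => c E = D).card + 1 ≤ σ := by omega
          have h7 : ((Q2.filter fun E => c E = D).card : ℝ) + 1 ≤ σ := by exact_mod_cast h6
          linarith
      rw [hQ2sum]
      refine (Finset.sum_le_sum h3).trans (le_of_eq ?_)
      rw [Finset.sum_add_distrib, Finset.sum_const, nsmul_eq_mul, hpc, ← Finset.mul_sum]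
      congr 2
      rw [hT, Finset.card_filter]
      push_cast
      rfl
    have ha2 : a ≤ 2 * M := by
      have h3 : a * N ≤ (ε * a + M) * N := by linarith
      have h4 := le_of_mul_le_mul_right h3 hNp
      have h5 := mul_le_mul_of_nonneg_right hε2 hap.le
      linarith
    have hTc : δq * (n : ℝ) ^ (k - 1) ≤ T.card := by
      have h3 : a * N ≤ ε * a * N + (N * ((σ : ℝ) - 1) + M * T.card) := by linarith
      have h4 : (σ : ℝ) - 1 + γ / 2 ≤ a - ε * a := by
        have h5 : (1 - ε) * ((σ : ℝ) - 1 + γ) ≤ (1 - ε) * a :=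
          mul_le_mul_of_nonneg_left ha (by linarith)
        have h6 := mul_nonneg hεp.le (by linarith : 0 ≤ 1 - γ)
        linarith
      have h5 : γ / 2 * N ≤ M * T.card := by
        have h6 := mul_le_mul_of_nonneg_right h4 hNp.le
        linarith
      have h6 : (M : ℝ) * (δq * (n : ℝ) ^ (k - 1)) ≤ M * T.card := by
        calc (M : ℝ) * (δq * (n : ℝ) ^ (k - 1)) ≤ M * (δq * (K0 * N)) :=
              mul_le_mul_of_nonneg_left (mul_le_mul_of_nonneg_left hnN hδqp.le) hMR.le
          _ = (M * (δq * K0)) * N := by ring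
          _ = γ / 2 * N := by rw [hδqk]
          _ ≤ _ := h5
      exact le_of_mul_le_mul_left h6 hMR
    have hA : ∀ D ∈ T, ∃ B ⊆ fib D, B.card = σ := fun D hD =>
      Finset.exists_subset_card_eq (Finset.mem_filter.1 hD).2
    choose! A hA1 hA2 using hA
    have h := hstep n (by omega) F T A (fun D hD => by
      obtain ⟨h3, h4⟩ := Finset.mem_powersetCard.1 (Finset.mem_filter.1 hD).1
      have h5 : ∀ y ∈ A D, y ∈ vtx n ∧ y ∉ D ∧ insert y D ∈ F := fun y hy => by
        have := hA1 D hD hy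
        simpa only [hfib, mem_filter_any] using this
      exact ⟨h3, h4, fun y hy => (h5 y hy).1, hA2 D hD, fun y hy => (h5 y hy).2⟩) hTc
    refine le_trans (mul_le_mul_of_nonneg_right ?_ (by positivity)) h
    calc b * a ^ t ≤ (d / 2) ^ t / (2 * M) ^ t * (2 * M) ^ t := by
          refine mul_le_mul ?_ (pow_le_pow_left₀ hap.le ha2 _) (by positivity) (by positivity)
          rw [hb]; exact min_le_right _ _
      _ = (d / 2) ^ t := by field_simp
end

section
/- Let t be a positive integer, d ≥ 2 a real, M > 0 a real, and let K be a d-graded t-uniform hypergraph with |K| < d^{t−1}·M. Then: (1) the number of vertices v ∈ V(K) with d_K(v) = ⌊d^{t−1}⌋ is less than 2tM; and (2) every admissible set S ⊆ V(K) with 1 ≤ |S| ≤ t−1 satisfies |Z_K(S)| ≤ t·2^{t+1}·d. -/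
open Finset Filter

attribute [local instance] Classical.propDecidable

theorem aux_count {α : Type} [DecidableEq α] (t : ℕ) (d : ℝ) (hd : 2 ≤ d)
    (K : Finset (Finset α)) (hunif : ∀ e ∈ K, e.card = t) (T A : Finset α) (k : ℕ)
    (hA : ∀ v ∈ A, uDeg K (insert v T) = ⌊d ^ k⌋₊) :
    (A.card : ℝ) * d ^ k ≤ 2 * t * uDeg K T := by
  have h1 : A.card * ⌊d ^ k⌋₊ ≤ uDeg K T * t := by
    unfold uDeg
    refine Finset.card_mul_le_card_mul (fun v e => v ∈ e) ?_ ?_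
    · intro v hv
      rw [← hA v hv]
      unfold uDeg
      apply Finset.card_le_card
      intro e he
      rw [Finset.mem_filter, Finset.insert_subset_iff] at he
      rw [Finset.mem_bipartiteAbove, Finset.mem_filter]
      exact ⟨⟨he.1, he.2.2⟩, he.2.1⟩
    · intro e he
      rw [Finset.mem_filter] at he
      rw [← hunif e he.1]
      apply Finset.card_le_card
      intro v hv
      exact (Finset.mem_bipartiteBelow _ |>.1 hv).2
  have h1' : (A.card : ℝ) * (⌊d ^ k⌋₊ : ℝ) ≤ uDeg K T * t := by exact_mod_cast h1
  have h2 : (1 : ℝ) ≤ d ^ k := one_le_pow₀ (by linarith)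
  have h3 : (1 : ℝ) ≤ (⌊d ^ k⌋₊ : ℝ) := by
    exact_mod_cast (Nat.one_le_floor_iff _).2 h2
  have h4 := Nat.lt_floor_add_one (d ^ k)
  have h5 : d ^ k ≤ 2 * (⌊d ^ k⌋₊ : ℝ) := by linarith
  calc (A.card : ℝ) * d ^ k ≤ A.card * (2 * (⌊d ^ k⌋₊ : ℝ)) := by gcongr
    _ ≤ 2 * t * uDeg K T := by linarith

/-- in a `d`-graded `t`-uniform hypergraph `K` with `|K| < d^{t−1}·M`, fewer
than `2tM` vertices have degree `⌊d^{t−1}⌋`, and every admissible set `S` with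
`1 ≤ |S| ≤ t−1` satisfies `|Z_K(S)| ≤ t·2^{t+1}·d`. -/
theorem stmt_13 {α : Type} [DecidableEq α] (t : ℕ) (ht : 1 ≤ t) (d M : ℝ)
    (hd : 2 ≤ d) (hM : 0 < M)
    (K : Finset (Finset α)) (hunif : ∀ e ∈ K, e.card = t)
    (hgraded : Graded t d K) (hsize : (K.card : ℝ) < d ^ (t - 1) * M) :
    ((((vertexSet K).filter fun v => uDeg K {v} = ⌊d ^ (t - 1)⌋₊).card : ℝ) < 2 * t * M) ∧
    (∀ S ⊆ vertexSet K, 1 ≤ S.card → S.card ≤ t - 1 → Admissible t d K S →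
      ((Zset t d K S).card : ℝ) ≤ (t : ℝ) * 2 ^ (t + 1) * d) := by
  constructor
  · have h := aux_count t d hd K hunif ∅
      ((vertexSet K).filter fun v => uDeg K {v} = ⌊d ^ (t - 1)⌋₊) (t - 1) (by
        intro v hv
        exact (Finset.mem_filter.1 hv).2)
    have h0 : uDeg K ∅ = K.card := by simp [uDeg]
    rw [h0] at h
    have hp : (0 : ℝ) < d ^ (t - 1) := by positivity
    have ht' : (0 : ℝ) < 2 * t := by
      have : (1 : ℝ) ≤ t := by exact_mod_cast ht
      linarith
    have h6 := mul_lt_mul_of_pos_left hsize ht'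
    refine lt_of_mul_lt_mul_right (a := d ^ (t - 1)) ?_ hp.le
    linarith
  · intro S hSV hS1 hSt hadm
    let Z : Finset α → Finset α := fun T =>
      (vertexSet K).filter fun v => v ∉ T ∧ Saturated t d K (insert v T)
    have hsub : Zset t d K S ⊆ (S.powerset.filter fun T => T.Nonempty).biUnion Z := by
      intro v hv
      unfold Zset at hv
      rw [Finset.mem_filter] at hv
      obtain ⟨hvK, hna, hns⟩ := hv
      unfold Admissible at hna
      push Not at hna
      obtain ⟨S', hS', hne, hsat⟩ := hna
      have hvS' : v ∈ S' := by
        by_contra hc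
        exact hadm S' ((Finset.subset_insert_iff_of_notMem hc).1 hS') hne hsat
      rw [Finset.mem_biUnion]
      refine ⟨S'.erase v, ?_, ?_⟩
      · rw [Finset.mem_filter, Finset.mem_powerset]
        refine ⟨Finset.subset_insert_iff.1 hS', ?_⟩
        rw [Finset.nonempty_iff_ne_empty]
        intro he
        rw [Finset.erase_eq_empty_iff] at he
        rcases he with he | he
        · rw [he] at hne
          exact Finset.not_nonempty_empty hne
        · rw [he] at hsat
          exact hns hsat
      · refine Finset.mem_filter.2 ⟨hvK, Finset.notMem_erase _ _, ?_⟩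
        rw [Finset.insert_erase hvS']
        exact hsat
    have hZ : ∀ T ∈ S.powerset.filter (fun T => T.Nonempty), ((Z T).card : ℝ) ≤ 2 * t * d := by
      intro T hT
      rw [Finset.mem_filter, Finset.mem_powerset] at hT
      have hc := Finset.card_le_card hT.1
      have hpos := hT.2.card_pos
      have h := aux_count t d hd K hunif T (Z T) (t - (T.card + 1)) (by
        intro v hv
        have hv' := (Finset.mem_filter.1 hv).2
        have := hv'.2
        unfold Saturated at this
        rwa [Finset.card_insert_of_notMem hv'.1] at this)
      have hg := hgraded T hpos (by omega)
      have hk : t - T.card = (t - (T.card + 1)) + 1 := by omega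
      rw [hk, pow_succ] at hg
      have hp : (0 : ℝ) < d ^ (t - (T.card + 1)) := by positivity
      refine le_of_mul_le_mul_right (a := d ^ (t - (T.card + 1))) ?_ hp
      have ht' : (0 : ℝ) ≤ 2 * t := by positivity
      have h6 := mul_le_mul_of_nonneg_left hg ht'
      linarith
    have hcard : ((Zset t d K S).card : ℝ) ≤
        ∑ T ∈ S.powerset.filter (fun T => T.Nonempty), ((Z T).card : ℝ) := by
      exact_mod_cast (Finset.card_le_card hsub).trans Finset.card_biUnion_le
    have hnum : ((S.powerset.filter (fun T => T.Nonempty)).card : ℝ) ≤ 2 ^ t := by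
      have h1 : (S.powerset.filter (fun T => T.Nonempty)).card ≤ 2 ^ S.card := by
        rw [← Finset.card_powerset]
        exact Finset.card_filter_le _ _
      have h2 : 2 ^ S.card ≤ 2 ^ t := Nat.pow_le_pow_right (by norm_num) (by omega)
      exact_mod_cast h1.trans h2
    have hs := Finset.sum_le_card_nsmul _ _ _ hZ
    rw [nsmul_eq_mul] at hs
    have hnn : (0 : ℝ) ≤ 2 * t * d := by positivity
    have h7 := mul_le_mul_of_nonneg_right hnum hnn
    have h8 : (t : ℝ) * 2 ^ (t + 1) * d = 2 ^ t * (2 * t * d) := by ring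
    rw [h8]
    linarith
end
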